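/- arXiv:1907.12313 — 2 statements merged into one kernel-verified Lean document; each statement's English description precedes it below -/
import Mathlib

section
/- Let n ≥ 1 and 1 ≤ k ≤ n. The function R ↦ F_k(R)^{1/(k+1)} is concave on S: for all R₀, R₁ ∈ S and all s ∈ [0,1], one has F_k((1−s)R₀ + sR₁)^{1/(k+1)} ≥ (1−s) F_k(R₀)^{1/(k+1)} + s F_k(R₁)^{1/(k+1)}. -/
open Matrix

/-- `σ_k(A)`: the k-th elementary symmetric function of the eigenvalues of `A`,
defined as `(−1)^k` times the coefficient of `X^(n−k)` in the characteristic polynomial. -/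
noncomputable def sigmaMat {n : ℕ} (A : Matrix (Fin n) (Fin n) ℝ) (k : ℕ) : ℝ :=
  (-1 : ℝ) ^ k * A.charpoly.coeff (n - k)

/-- The k-th Newton transform `T_k(A) = Σ_{j=0}^{k} (−1)^j σ_{k−j}(A) A^j`. -/
noncomputable def newtonT {n : ℕ} (A : Matrix (Fin n) (Fin n) ℝ) (k : ℕ) :
    Matrix (Fin n) (Fin n) ℝ :=
  ∑ j ∈ Finset.range (k + 1), ((-1 : ℝ) ^ j * sigmaMat A (k - j)) • A ^ j

/-- `A ∈ Γ_k^+` iff `σ_j(A) > 0` for all `1 ≤ j ≤ k`. -/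
def GammaPlus {n : ℕ} (k : ℕ) (A : Matrix (Fin n) (Fin n) ℝ) : Prop :=
  ∀ j : ℕ, 1 ≤ j → j ≤ k → 0 < sigmaMat A j

/-- The lower-right `n × n` block of an `(n+1) × (n+1)` matrix. -/
def lowerBlock {n : ℕ} (R : Matrix (Fin (n + 1)) (Fin (n + 1)) ℝ) :
    Matrix (Fin n) (Fin n) ℝ :=
  fun i j => R i.succ j.succ

/-- The vector `x = (r_{01}, …, r_{0n})`. -/
def xVec {n : ℕ} (R : Matrix (Fin (n + 1)) (Fin (n + 1)) ℝ) : Fin n → ℝ :=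
  fun i => R 0 i.succ

/-- `F_k(R) = r₀₀ σ_k(r) − x T_{k−1}(r) xᵀ`. -/
noncomputable def Fk {n : ℕ} (k : ℕ) (R : Matrix (Fin (n + 1)) (Fin (n + 1)) ℝ) : ℝ :=
  R 0 0 * sigmaMat (lowerBlock R) k -
    xVec R ⬝ᵥ (newtonT (lowerBlock R) (k - 1)).mulVec (xVec R)

/-- Membership in the set `S`: `R` symmetric, lower-right block in `Γ_k^+`, and `F_k(R) > 0`. -/
def inS {n : ℕ} (k : ℕ) (R : Matrix (Fin (n + 1)) (Fin (n + 1)) ℝ) : Prop :=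
  R.IsSymm ∧ GammaPlus k (lowerBlock R) ∧ 0 < Fk k R

/-!
Write `J = diag(0, 1, …, 1)`. Cramer's rule and the expansion of the adjugate of `X + r` in Newton
transforms show that `F_k(R)` is the coefficient of `X ^ (n - k)` in `det (R + X J)`. For `Im z > 0`
the polynomial `u ↦ det (R + z + u J)` has no zeros with `Im u ≥ 0`, so by Gauss–Lucas neither have
its derivatives, and hence its coefficients do not vanish: `F_k`, as a homogeneous polynomial of
degree `k + 1` in the entries of `R`, is hyperbolic in the direction of the identity. By Gårding's
theorem its `(k + 1)`-th root is concave on the hyperbolicity cone: on lines directed by a point of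
the cone the polynomial is a product of real linear factors, to which the AM-GM inequality applies.
Finally, `S` lies in this cone since each of its points can be joined to the identity through
symmetric matrices with `F_k ≠ 0`.
-/

section ZeroFree

theorem le_norm_of_forall_mem_frontier_le_norm {U : Set ℂ} (hU : Bornology.IsBounded U)
    {f : ℂ → ℂ} (hf : DiffContOnCl ℂ f U) (hne : ∀ w ∈ closure U, f w ≠ 0) {m : ℝ} (hm : 0 < m)
    (hle : ∀ w ∈ frontier U, m ≤ ‖f w‖) {w : ℂ} (hw : w ∈ closure U) : m ≤ ‖f w‖ := by
  have hinv : ‖(f⁻¹) w‖ ≤ m⁻¹ :=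
    Complex.norm_le_of_forall_mem_frontier_norm_le hU (hf.inv hne)
      (fun v hv => by simpa using inv_anti₀ hm (hle v hv)) hw
  rw [Pi.inv_apply, norm_inv] at hinv
  exact (inv_le_inv₀ (norm_pos_iff.2 (hne w hw)) hm).1 hinv

-- By the uniform lower bound on the frontier, being zero-free is both a closed and an open
-- condition on the parameter.
theorem forall_mem_closure_ne_zero_of_frontier {X : Type*} [TopologicalSpace X] [CompactSpace X]
    [PreconnectedSpace X] {U : Set ℂ} (hU : Bornology.IsBounded U) {f : X → ℂ → ℂ}
    (hcont : Continuous (Function.uncurry f)) (hf : ∀ x, DiffContOnCl ℂ (f x) U)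
    (hfrontier : ∀ x, ∀ w ∈ frontier U, f x w ≠ 0) {x₀ : X}
    (h₀ : ∀ w ∈ closure U, f x₀ w ≠ 0) (x : X) {w : ℂ} (hw : w ∈ closure U) : f x w ≠ 0 := by
  obtain ⟨m, hm, hle⟩ : ∃ m, 0 < m ∧ ∀ p ∈ Set.univ ×ˢ frontier U,
      m ≤ ‖Function.uncurry f p‖ :=
    (isCompact_univ.prod (hU.isCompact_closure.of_isClosed_subset isClosed_frontier
      frontier_subset_closure)).exists_forall_le' hcont.norm.continuousOn
      fun p hp => norm_pos_iff.2 (hfrontier p.1 p.2 hp.2)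
  set S : Set X := {x | ∀ w ∈ closure U, f x w ≠ 0}
  have hS_closed : IsClosed S := by
    have hS_eq : S = ⋂ w ∈ closure U, {x | m ≤ ‖f x w‖} := by
      ext y
      simp only [Set.mem_iInter]
      exact ⟨fun hy v hv => le_norm_of_forall_mem_frontier_le_norm hU (hf y) hy hm
        (fun u hu => hle (y, u) ⟨trivial, hu⟩) hv,
        fun hy v hv => norm_pos_iff.1 (hm.trans_le (hy v hv))⟩
    rw [hS_eq]
    exact isClosed_biInter fun v _ =>
      isClosed_le continuous_const (hcont.comp (Continuous.prodMk_left v)).norm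
  have hS_open : IsOpen S := isOpen_iff_mem_nhds.2 fun y hy =>
    hU.isCompact_closure.eventually_forall_of_forall_eventually
      fun v hv => hcont.continuousAt.eventually_ne (hy v hv)
  have huniv : S = Set.univ := IsClopen.eq_univ ⟨hS_closed, hS_open⟩ ⟨x₀, h₀⟩
  exact (huniv ▸ Set.mem_univ x : x ∈ S) w hw

end ZeroFree

section HomogeneousPolynomials

open MvPolynomial

variable {ι : Type*}

theorem degree_eq_of_isHomogeneous {R : Type*} [CommSemiring R] {g : MvPolynomial ι R} {d : ℕ}
    (hg : g.IsHomogeneous d) {m : ι →₀ ℕ} (hm : coeff m g ≠ 0) : m.degree = d := by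
  rw [Finsupp.degree_eq_weight_one]
  exact hg hm

theorem aeval_mul_of_isHomogeneous {R A : Type*} [CommSemiring R] [CommSemiring A] [Algebra R A]
    {g : MvPolynomial ι R} {d : ℕ} (hg : g.IsHomogeneous d) (c : A) (z : ι → A) :
    aeval (fun i => c * z i) g = c ^ d * aeval z g := by
  rw [aeval_def, aeval_def, eval₂_eq, eval₂_eq, Finset.mul_sum]
  refine Finset.sum_congr rfl fun m hm => ?_
  simp_rw [mul_pow]
  rw [Finset.prod_mul_distrib, Finset.prod_pow_eq_pow_sum,
    ← degree_eq_of_isHomogeneous hg (mem_support_iff.1 hm), Finsupp.degree_apply, mul_left_comm]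

theorem eval_smul_of_isHomogeneous {R : Type*} [CommSemiring R] {g : MvPolynomial ι R} {d : ℕ}
    (hg : g.IsHomogeneous d) (c : R) (x : ι → R) : eval (c • x) g = c ^ d * eval x g :=
  aeval_mul_of_isHomogeneous hg c x

theorem aeval_ofReal (g : MvPolynomial ι ℝ) (x : ι → ℝ) :
    aeval (fun i => (x i : ℂ)) g = (eval x g : ℂ) :=
  aeval_algebraMap_apply ℂ x g

theorem continuous_aeval {R A Z : Type*} [CommSemiring R] [CommSemiring A] [Algebra R A]
    [TopologicalSpace A] [IsTopologicalSemiring A] [TopologicalSpace Z] (g : MvPolynomial ι R)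
    {z : Z → ι → A} (hz : ∀ i, Continuous fun w => z w i) :
    Continuous fun w => aeval (z w) g := by
  simp_rw [aeval_def, eval₂_eq]
  fun_prop

theorem differentiable_aeval {R 𝕜 : Type*} [CommSemiring R] [NontriviallyNormedField 𝕜]
    [Algebra R 𝕜] (g : MvPolynomial ι R)
    {z : 𝕜 → ι → 𝕜} (hz : ∀ i, Differentiable 𝕜 fun w => z w i) :
    Differentiable 𝕜 fun w => aeval (z w) g := by
  simp_rw [aeval_def, eval₂_eq]
  fun_prop

theorem re_one_add_div_one_sub (w : ℂ) :
    ((1 + w) / (1 - w)).re = (1 - ‖w‖ ^ 2) / ‖1 - w‖ ^ 2 := by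
  rw [Complex.div_re, ← add_div, Complex.sq_norm, Complex.sq_norm, Complex.normSq_apply w]
  congr 1
  simp only [Complex.add_re, Complex.sub_re, Complex.add_im, Complex.sub_im, Complex.one_re,
    Complex.one_im]
  ring

theorem norm_sub_one_div_add_one_le_one {t : ℂ} (ht : 0 ≤ t.re) : ‖(t - 1) / (t + 1)‖ ≤ 1 := by
  rw [norm_div]
  refine div_le_one_of_le₀ ((sq_le_sq₀ (norm_nonneg _) (norm_nonneg _)).1 ?_) (norm_nonneg _)
  rw [Complex.sq_norm, Complex.sq_norm, Complex.normSq_apply, Complex.normSq_apply]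
  simp only [Complex.add_re, Complex.sub_re, Complex.add_im, Complex.sub_im, Complex.one_re,
    Complex.one_im]
  linarith

-- At the pole `w = 1` of the Cayley transform `t = (1 + w) / (1 - w)` the value is `2 ^ d * g A`.
theorem aeval_cayley_ne_zero {g : MvPolynomial ι ℝ} {d : ℕ} (hg : g.IsHomogeneous d) {A B : ι → ℂ}
    (hA : aeval A g ≠ 0) {w : ℂ} (h : ∀ t : ℂ, t.re = (1 - ‖w‖ ^ 2) / ‖1 - w‖ ^ 2 →
      aeval (fun i => B i + t * A i) g ≠ 0) :
    aeval (fun i => (1 - w) * B i + (1 + w) * A i) g ≠ 0 := by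
  rcases eq_or_ne w 1 with rfl | hw
  · simp only [sub_self, zero_mul, zero_add, aeval_mul_of_isHomogeneous hg]
    exact mul_ne_zero (pow_ne_zero _ (by norm_num)) hA
  · have hw' : 1 - w ≠ 0 := sub_ne_zero.2 hw.symm
    have hsmul : (fun i => (1 - w) * B i + (1 + w) * A i) =
        fun i => (1 - w) * (B i + (1 + w) / (1 - w) * A i) := by
      simp only [mul_add, ← mul_assoc, mul_div_cancel₀ _ hw']
    rw [hsmul, aeval_mul_of_isHomogeneous hg]
    exact mul_ne_zero (pow_ne_zero _ hw') (h _ (re_one_add_div_one_sub w))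

-- Homogeneity and the Cayley transform replace the right half-plane by the closed unit disc, which
-- is compact.
theorem forall_re_nonneg_aeval_ne_zero {X : Type*} [TopologicalSpace X] [CompactSpace X]
    [PreconnectedSpace X] {g : MvPolynomial ι ℝ} {d : ℕ} (hg : g.IsHomogeneous d) {A : ι → ℂ}
    (hA : aeval A g ≠ 0) {B : X → ι → ℂ} (hB : Continuous B)
    (himag : ∀ x, ∀ t : ℂ, t.re = 0 → aeval (fun i => B x i + t * A i) g ≠ 0) {x₀ : X}
    (h₀ : ∀ t : ℂ, 0 ≤ t.re → aeval (fun i => B x₀ i + t * A i) g ≠ 0) (x : X) {t : ℂ}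
    (ht : 0 ≤ t.re) : aeval (fun i => B x i + t * A i) g ≠ 0 := by
  have hdisc : ∀ x, ∀ w ∈ closure (Metric.ball (0 : ℂ) 1),
      aeval (fun i => (1 - w) * B x i + (1 + w) * A i) g ≠ 0 := by
    refine fun x w => forall_mem_closure_ne_zero_of_frontier Metric.isBounded_ball
      (f := fun x w => aeval (fun i => (1 - w) * B x i + (1 + w) * A i) g)
      (continuous_aeval g fun i => by fun_prop)
      (fun x => (differentiable_aeval g fun i => by fun_prop).diffContOnCl)
      (fun x w hw => aeval_cayley_ne_zero hg hA fun t ht => himag x t ?_)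
      (fun w hw => aeval_cayley_ne_zero hg hA fun t ht => h₀ t ?_) x
    · rw [frontier_ball _ one_ne_zero, mem_sphere_zero_iff_norm] at hw
      rw [ht, hw, one_pow, sub_self, zero_div]
    · rw [closure_ball _ one_ne_zero, mem_closedBall_zero_iff] at hw
      rw [ht]
      exact div_nonneg (sub_nonneg.2 (pow_le_one₀ (norm_nonneg w) hw)) (sq_nonneg _)
  have ht1 : t + 1 ≠ 0 := fun h => by
    have := congrArg Complex.re h
    rw [Complex.add_re, Complex.one_re, Complex.zero_re] at this
    linarith
  intro hzero
  refine hdisc x ((t - 1) / (t + 1)) ?_ ?_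
  · rw [closure_ball _ one_ne_zero, mem_closedBall_zero_iff]
    exact norm_sub_one_div_add_one_le_one ht
  · have hsmul : (fun i => (1 - (t - 1) / (t + 1)) * B x i + (1 + (t - 1) / (t + 1)) * A i) =
        fun i => 2 / (t + 1) * (B x i + t * A i) := by
      funext i
      field_simp
      ring
    rw [hsmul, aeval_mul_of_isHomogeneous hg, hzero, mul_zero]

end HomogeneousPolynomials

section Hyperbolic

open MvPolynomial

variable {ι : Type*}

/-- The real polynomial `g` is hyperbolic in the direction `e`: restricted to a real line of
direction `e` it has only real roots. This is meant for homogeneous `g`, and then includes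
`g e ≠ 0`. -/
def IsHyperbolicAlong (g : MvPolynomial ι ℝ) (e : ι → ℝ) : Prop :=
  ∀ (x : ι → ℝ) (z : ℂ), z.im ≠ 0 → aeval (fun i => (x i : ℂ) + z * e i) g ≠ 0

/-- The open hyperbolicity cone of `g` around `e`, in the form: all roots of `t ↦ g (a + t e)`
are negative. -/
def hyperbolicityCone (g : MvPolynomial ι ℝ) (e : ι → ℝ) : Set (ι → ℝ) :=
  {a | ∀ t : ℝ, 0 ≤ t → eval (a + t • e) g ≠ 0}

theorem aeval_ofReal_add_ofReal_mul (g : MvPolynomial ι ℝ) (x e : ι → ℝ) (t : ℝ) :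
    aeval (fun i => (x i : ℂ) + t * e i) g = (eval (x + t • e) g : ℂ) := by
  rw [← aeval_ofReal]
  simp only [Pi.add_apply, Pi.smul_apply, smul_eq_mul, Complex.ofReal_add, Complex.ofReal_mul]

variable {g : MvPolynomial ι ℝ} {d : ℕ} {e a b : ι → ℝ}

theorem isHyperbolicAlong_of_im_pos (hg : g.IsHomogeneous d)
    (h : ∀ (x : ι → ℝ) (z : ℂ), 0 < z.im → aeval (fun i => (x i : ℂ) + z * e i) g ≠ 0) :
    IsHyperbolicAlong g e := fun x z hz => by
  rcases hz.lt_or_gt with hneg | hpos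
  · have hflip := h (-x) (-z) (by simpa using hneg)
    have hneg_one : (fun i => (((-x) i : ℝ) : ℂ) + -z * e i) =
        fun i => -1 * ((x i : ℂ) + z * e i) := by
      funext i
      rw [Pi.neg_apply, Complex.ofReal_neg]
      ring
    rw [hneg_one, aeval_mul_of_isHomogeneous hg] at hflip
    exact right_ne_zero_of_mul hflip
  · exact h x z hpos

theorem eval_ne_zero_of_mem_hyperbolicityCone (ha : a ∈ hyperbolicityCone g e) : eval a g ≠ 0 := by
  simpa using ha 0 le_rfl

theorem smul_mem_hyperbolicityCone (hg : g.IsHomogeneous d) (ha : a ∈ hyperbolicityCone g e)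
    {c : ℝ} (hc : 0 < c) : c • a ∈ hyperbolicityCone g e := fun t ht => by
  have hsmul : c • a + t • e = c • (a + (c⁻¹ * t) • e) := by
    rw [smul_add, smul_smul, mul_inv_cancel_left₀ hc.ne']
  rw [hsmul, eval_smul_of_isHomogeneous hg]
  exact mul_ne_zero (pow_ne_zero _ hc.ne') (ha _ (by positivity))

theorem add_smul_mem_hyperbolicityCone (ha : a ∈ hyperbolicityCone g e) {c : ℝ} (hc : 0 ≤ c) :
    a + c • e ∈ hyperbolicityCone g e := fun t ht => by
  rw [add_assoc, ← add_smul]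
  exact ha _ (add_nonneg hc ht)

theorem exists_pos_sub_smul_mem_hyperbolicityCone (ha : a ∈ hyperbolicityCone g e) :
    ∃ δ : ℝ, 0 < δ ∧ a - δ • e ∈ hyperbolicityCone g e := by
  have hcont : Continuous fun t : ℝ => eval (a + t • e) g := g.continuous_eval.comp (by fun_prop)
  obtain ⟨δ, hδ, hball⟩ := Metric.eventually_nhds_iff.1
    (hcont.continuousAt.eventually_ne (ha 0 le_rfl))
  refine ⟨δ / 2, half_pos hδ, fun t ht => ?_⟩
  rw [sub_add, ← sub_smul, sub_eq_add_neg, ← neg_smul, neg_sub]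
  rcases le_or_gt 0 (t - δ / 2) with h | h
  · exact ha _ h
  · refine hball ?_
    rw [Real.dist_0_eq_abs, abs_of_neg h]
    linarith

namespace IsHyperbolicAlong

theorem eval_ne_zero (hg : g.IsHomogeneous d) (he : IsHyperbolicAlong g e) : eval e g ≠ 0 := by
  have h := he 0 Complex.I (by simp)
  simp only [Pi.zero_apply, Complex.ofReal_zero, zero_add, aeval_mul_of_isHomogeneous hg,
    aeval_ofReal] at h
  exact_mod_cast right_ne_zero_of_mul h

theorem aeval_ne_zero (he : IsHyperbolicAlong g e) (ha : a ∈ hyperbolicityCone g e) {z : ℂ}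
    (hz : z.im = 0 → 0 ≤ z.re) : aeval (fun i => (a i : ℂ) + z * e i) g ≠ 0 := by
  by_cases him : z.im = 0
  · obtain ⟨t, rfl⟩ : ∃ t : ℝ, (t : ℂ) = z := ⟨z.re, Complex.ext rfl him.symm⟩
    rw [aeval_ofReal_add_ofReal_mul]
    exact_mod_cast ha t (hz him)
  · exact he a z him

theorem mem_hyperbolicityCone_of_joinedIn (hg : g.IsHomogeneous d) (he : IsHyperbolicAlong g e)
    (hab : JoinedIn {x | eval x g ≠ 0} a b) (ha : a ∈ hyperbolicityCone g e) :
    b ∈ hyperbolicityCone g e := by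
  obtain ⟨γ, hγ⟩ := hab
  intro t ht
  have hge : aeval (fun i => (e i : ℂ)) g ≠ 0 := by
    rw [aeval_ofReal]
    exact_mod_cast he.eval_ne_zero hg
  have hne := forall_re_nonneg_aeval_ne_zero hg hge
    (B := fun s i => (γ s i : ℂ)) (x₀ := 0) (by fun_prop) ?_ ?_ 1 (t := t) ht
  · rw [γ.target, aeval_ofReal_add_ofReal_mul] at hne
    exact_mod_cast hne
  · intro s t ht
    by_cases him : t.im = 0
    · rw [show t = (0 : ℝ) from Complex.ext ht him, aeval_ofReal_add_ofReal_mul, zero_smul,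
        add_zero]
      exact_mod_cast hγ s
    · exact he _ _ him
  · intro t ht
    rw [γ.source]
    exact he.aeval_ne_zero ha fun _ => ht

theorem self_mem_hyperbolicityCone (hg : g.IsHomogeneous d) (he : IsHyperbolicAlong g e) :
    e ∈ hyperbolicityCone g e := fun t ht => by
  rw [show e + t • e = (1 + t) • e by rw [add_smul, one_smul], eval_smul_of_isHomogeneous hg]
  exact mul_ne_zero (pow_ne_zero _ (by positivity)) (he.eval_ne_zero hg)

theorem joinedIn_of_mem_hyperbolicityCone (hg : g.IsHomogeneous d) (he : IsHyperbolicAlong g e)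
    (ha : a ∈ hyperbolicityCone g e) : JoinedIn {x | eval x g ≠ 0} e a := by
  refine JoinedIn.ofLine (f := fun s : ℝ => s • a + (1 - s) • e) (by fun_prop) (by simp) (by simp)
    (Set.image_subset_iff.2 fun s hs => ?_)
  rcases hs.1.eq_or_lt with rfl | hs0
  · simpa using he.eval_ne_zero hg
  · exact eval_ne_zero_of_mem_hyperbolicityCone (add_smul_mem_hyperbolicityCone
      (smul_mem_hyperbolicityCone hg ha hs0) (sub_nonneg.2 hs.2))

theorem aeval_mul_add_mul_ne_zero (hg : g.IsHomogeneous d) (he : IsHyperbolicAlong g e)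
    (ha : a ∈ hyperbolicityCone g e) {c : ℝ} (hc : 0 < c) {t : ℂ} (ht : 0 ≤ t.re) :
    aeval (fun i => (c : ℂ) * e i + t * a i) g ≠ 0 := by
  rcases eq_or_ne t 0 with rfl | ht0
  · simp only [zero_mul, add_zero, aeval_mul_of_isHomogeneous hg, aeval_ofReal]
    exact mul_ne_zero (pow_ne_zero _ (by exact_mod_cast hc.ne'))
      (by exact_mod_cast he.eval_ne_zero hg)
  · have hsmul : (fun i => (c : ℂ) * e i + t * a i) = fun i => t * (a i + c / t * e i) := by
      funext i
      field_simp
      ring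
    rw [hsmul, aeval_mul_of_isHomogeneous hg]
    refine mul_ne_zero (pow_ne_zero _ ht0) (he.aeval_ne_zero ha fun _ => ?_)
    rw [Complex.div_re, Complex.ofReal_re, Complex.ofReal_im, zero_mul, zero_div, add_zero]
    exact div_nonneg (mul_nonneg hc.le ht) (Complex.normSq_nonneg t)

-- Moving `x` to `0` along a segment, the zeros in `z` cannot cross the real axis, since `g` is
-- hyperbolic in the direction `e`.
theorem aeval_add_I_mul_add_mul_ne_zero (hg : g.IsHomogeneous d) (he : IsHyperbolicAlong g e)
    (ha : a ∈ hyperbolicityCone g e) (x : ι → ℝ) {c : ℝ} (hc : 0 < c) {z : ℂ} (hz : 0 ≤ z.im) :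
    aeval (fun i => x i + c * Complex.I * e i + z * a i) g ≠ 0 := by
  have hA : aeval (fun i => Complex.I * a i) g ≠ 0 := by
    rw [aeval_mul_of_isHomogeneous hg, aeval_ofReal]
    exact mul_ne_zero (pow_ne_zero _ Complex.I_ne_zero)
      (by exact_mod_cast eval_ne_zero_of_mem_hyperbolicityCone ha)
  have hne := forall_re_nonneg_aeval_ne_zero hg hA (X := unitInterval)
    (B := fun s i => (s : ℝ) * x i + c * Complex.I * e i) (x₀ := 0) (by fun_prop)
    (fun s t ht => ?_) (fun t ht => ?_) 1 (t := -Complex.I * z) (by simpa using hz)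
  · have hrotate : -Complex.I * z * Complex.I = z := by linear_combination -z * Complex.I_mul_I
    simpa only [Set.Icc.coe_one, Complex.ofReal_one, one_mul, ← mul_assoc, hrotate] using hne
  · have hshift : (fun i => (s : ℝ) * x i + c * Complex.I * e i + t * (Complex.I * a i)) =
        fun i => (((s : ℝ) • x - t.im • a) i : ℂ) + c * Complex.I * e i := by
      funext i
      have ht_eq : t = t.im * Complex.I := by simpa [ht] using (Complex.re_add_im t).symm
      simp only [Pi.sub_apply, Pi.smul_apply, smul_eq_mul]
      push_cast
      linear_combination a i * t.im * Complex.I_mul_I + a i * Complex.I * ht_eq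
    rw [hshift]
    exact he _ _ (by simpa using hc.ne')
  · have hrotate : (fun i => ((0 : unitInterval) : ℝ) * x i + c * Complex.I * e i +
        t * (Complex.I * a i)) = fun i => Complex.I * (c * e i + t * a i) := by
      funext i
      rw [Set.Icc.coe_zero, Complex.ofReal_zero]
      ring
    rw [hrotate, aeval_mul_of_isHomogeneous hg]
    exact mul_ne_zero (pow_ne_zero _ Complex.I_ne_zero) (he.aeval_mul_add_mul_ne_zero hg ha hc ht)

-- Since the cone is open, a small multiple `δ e` can be split off from `a`; it supplies the
-- imaginary shift in the direction `e`.
theorem of_mem_hyperbolicityCone (hg : g.IsHomogeneous d) (he : IsHyperbolicAlong g e)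
    (ha : a ∈ hyperbolicityCone g e) : IsHyperbolicAlong g a := by
  obtain ⟨δ, hδ, hmem⟩ := exists_pos_sub_smul_mem_hyperbolicityCone ha
  refine isHyperbolicAlong_of_im_pos hg fun x z hz => ?_
  have hsplit : (fun i => (x i : ℂ) + z * a i) = fun i =>
      ((x + (z.re * δ) • e) i : ℂ) + (z.im * δ : ℝ) * Complex.I * e i + z * (a - δ • e) i := by
    funext i
    simp only [Pi.add_apply, Pi.sub_apply, Pi.smul_apply, smul_eq_mul]
    push_cast
    linear_combination -(δ * e i) * Complex.re_add_im z
  rw [hsplit]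
  exact he.aeval_add_I_mul_add_mul_ne_zero hg hmem _ (mul_pos hz hδ) hz.le

theorem hyperbolicityCone_subset (hg : g.IsHomogeneous d) (he : IsHyperbolicAlong g e)
    (ha : a ∈ hyperbolicityCone g e) : hyperbolicityCone g e ⊆ hyperbolicityCone g a :=
  fun _ hb => (he.of_mem_hyperbolicityCone hg ha).mem_hyperbolicityCone_of_joinedIn hg
    ((he.joinedIn_of_mem_hyperbolicityCone hg ha).symm.trans
      (he.joinedIn_of_mem_hyperbolicityCone hg hb))
    ((he.of_mem_hyperbolicityCone hg ha).self_mem_hyperbolicityCone hg)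

theorem convex_hyperbolicityCone (hg : g.IsHomogeneous d) (he : IsHyperbolicAlong g e) :
    Convex ℝ (hyperbolicityCone g e) := by
  refine convex_iff_forall_pos.2 fun a ha b hb u v hu hv _ t ht => ?_
  have hmem : v • b + t • e ∈ hyperbolicityCone g a :=
    he.hyperbolicityCone_subset hg ha
      (add_smul_mem_hyperbolicityCone (smul_mem_hyperbolicityCone hg hb hv) ht)
  rw [add_assoc, add_comm]
  exact hmem u hu.le

end IsHyperbolicAlong

end Hyperbolic

section GeometricMean

theorem prod_rpow_add_prod_rpow_le_prod_add_rpow {ι : Type*} (s : Finset ι) {w a b : ι → ℝ}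
    (hw : ∀ i ∈ s, 0 ≤ w i) (hw_sum : ∑ i ∈ s, w i = 1) (ha : ∀ i ∈ s, 0 ≤ a i)
    (hb : ∀ i ∈ s, 0 ≤ b i) :
    ∏ i ∈ s, a i ^ w i + ∏ i ∈ s, b i ^ w i ≤ ∏ i ∈ s, (a i + b i) ^ w i := by
  have hab : ∀ i ∈ s, 0 ≤ a i + b i := fun i hi => add_nonneg (ha i hi) (hb i hi)
  have hfactor : ∀ c : ι → ℝ, (∀ i ∈ s, 0 ≤ c i ∧ c i ≤ a i + b i) →
      ∏ i ∈ s, c i ^ w i =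
        (∏ i ∈ s, (c i / (a i + b i)) ^ w i) * ∏ i ∈ s, (a i + b i) ^ w i := fun c hc => by
    rw [← Finset.prod_mul_distrib]
    refine Finset.prod_congr rfl fun i hi => ?_
    rw [← Real.mul_rpow (div_nonneg (hc i hi).1 (hab i hi)) (hab i hi),
      div_mul_cancel_of_imp fun h => le_antisymm (h ▸ (hc i hi).2) (hc i hi).1]
  have hratios : ∏ i ∈ s, (a i / (a i + b i)) ^ w i + ∏ i ∈ s, (b i / (a i + b i)) ^ w i ≤ 1 :=
    calc
      _ ≤ ∑ i ∈ s, w i * (a i / (a i + b i)) + ∑ i ∈ s, w i * (b i / (a i + b i)) :=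
        add_le_add
          (Real.geom_mean_le_arith_mean_weighted s w _ hw hw_sum
            fun i hi => div_nonneg (ha i hi) (hab i hi))
          (Real.geom_mean_le_arith_mean_weighted s w _ hw hw_sum
            fun i hi => div_nonneg (hb i hi) (hab i hi))
      _ = ∑ i ∈ s, w i * ((a i + b i) / (a i + b i)) := by
        simp only [← Finset.sum_add_distrib, ← mul_add, ← add_div]
      _ ≤ ∑ i ∈ s, w i := Finset.sum_le_sum fun i hi =>
        mul_le_of_le_one_right (hw i hi) (div_self_le_one _)
      _ = 1 := hw_sum
  rw [hfactor a fun i hi => ⟨ha i hi, le_add_of_nonneg_right (hb i hi)⟩,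
    hfactor b fun i hi => ⟨hb i hi, le_add_of_nonneg_left (ha i hi)⟩, ← add_mul]
  exact mul_le_of_le_one_left (Finset.prod_nonneg fun i hi => Real.rpow_nonneg (hab i hi) _) hratios

theorem add_multiset_prod_rpow_le {m : Multiset ℝ} (hm : m ≠ 0) (hnonneg : ∀ r ∈ m, 0 ≤ r) {t : ℝ}
    (ht : 0 ≤ t) :
    t + m.prod ^ (1 / (m.card : ℝ)) ≤ (m.map fun r => t + r).prod ^ (1 / (m.card : ℝ)) := by
  have hr : ∀ i : m, 0 ≤ (i : ℝ) := fun i => hnonneg _ Multiset.coe_mem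
  have hle := prod_rpow_add_prod_rpow_le_prod_add_rpow (Finset.univ : Finset m)
    (w := fun _ => 1 / (m.card : ℝ)) (a := fun _ => t) (b := fun i => i)
    (fun _ _ => by positivity) (by simp [hm]) (fun _ _ => ht) (fun i _ => hr i)
  rw [Finset.prod_const, Finset.card_univ, Multiset.card_coe, one_div,
    Real.rpow_inv_natCast_pow ht (by simpa using hm)] at hle
  rw [Real.finsetProd_rpow _ _ fun i _ => hr i,
    Real.finsetProd_rpow _ _ fun i _ => add_nonneg ht (hr i)] at hle
  rwa [one_div, Multiset.prod_eq_prod_coe m, ← Multiset.map_univ, Finset.prod_eq_multiset_prod]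

end GeometricMean

section Concavity

open MvPolynomial

variable {ι : Type*}

theorem coeff_aeval_of_isHomogeneous {R : Type*} [CommSemiring R] {g : MvPolynomial ι R} {d : ℕ}
    (hg : g.IsHomogeneous d) {p : ι → Polynomial R} (hp : ∀ i, (p i).natDegree ≤ 1) :
    (aeval p g).coeff d = eval (fun i => (p i).coeff 1) g := by
  classical
  have hprod : ∀ {A : Type _} [CommSemiring A] (m : ι →₀ ℕ) (q : ι → A),
      ∏ i ∈ m.support, q i ^ m i = (m.toMultiset.map q).prod := fun m q => by
    simp only [Finset.prod_multiset_map_count, Finsupp.toFinset_toMultiset,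
      Finsupp.count_toMultiset]
  rw [aeval_def, eval₂_eq, eval_eq, Polynomial.finsetSum_coeff]
  refine Finset.sum_congr rfl fun m hm => ?_
  have hcard : (m.toMultiset.map p).card * 1 = d := by
    rw [mul_one, Multiset.card_map, Finsupp.card_toMultiset,
      ← degree_eq_of_isHomogeneous hg (mem_support_iff.1 hm)]
    rfl
  rw [← Polynomial.C_eq_algebraMap, Polynomial.coeff_C_mul, hprod, hprod, ← hcard,
    Polynomial.coeff_multiset_prod_of_natDegree_le _ _ (by simpa using fun i _ => hp i),
    Multiset.map_map]
  rfl

theorem splits_of_forall_im_ne_zero_aeval_ne_zero {P : Polynomial ℝ}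
    (hP : ∀ z : ℂ, z.im ≠ 0 → Polynomial.aeval z P ≠ 0) : P.Splits := by
  refine .of_splits_map_of_injective (algebraMap ℝ ℂ).injective (IsAlgClosed.splits _)
    fun z hz => ⟨z.re, Complex.ext rfl (not_not.1 fun him => hP z (Ne.symm him) ?_)⟩
  have hroot := Polynomial.isRoot_of_mem_roots hz
  rwa [Polynomial.IsRoot, Polynomial.eval_map_algebraMap] at hroot

namespace IsHyperbolicAlong

variable {g : MvPolynomial ι ℝ} {d : ℕ} {e a b : ι → ℝ}

theorem exists_eval_add_smul_eq_prod (hg : g.IsHomogeneous d) (he : IsHyperbolicAlong g e)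
    (ha : a ∈ hyperbolicityCone g e) :
    ∃ m : Multiset ℝ, m.card = d ∧ (∀ r ∈ m, 0 < r) ∧ ∀ t : ℝ,
      eval (a + t • e) g = eval e g * (m.map fun r => t + r).prod := by
  set p : ι → Polynomial ℝ := fun i => Polynomial.C (a i) + Polynomial.C (e i) * Polynomial.X
    with hp
  set P : Polynomial ℝ := aeval p g with hP
  have hp_deg : ∀ i, (p i).natDegree ≤ 1 := fun i => by
    simp only [hp]
    compute_degree
  have hP_aeval : ∀ {A : Type} [CommRing A] [Algebra ℝ A] (t : A), Polynomial.aeval t P =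
      aeval (fun i => algebraMap ℝ A (a i) + t * algebraMap ℝ A (e i)) g := fun t => by
    rw [hP, comp_aeval_apply]
    simp only [hp, map_add, map_mul, Polynomial.aeval_C, Polynomial.aeval_X, mul_comm t]
  have hP_eval : ∀ t : ℝ, P.eval t = eval (a + t • e) g := fun t => by
    rw [← Polynomial.coe_aeval_eq_eval, hP_aeval, ← coe_aeval_eq_eval]
    rfl
  have hP_splits : P.Splits := splits_of_forall_im_ne_zero_aeval_ne_zero fun z hz => by
    rw [hP_aeval]
    exact he a z hz
  have hP_coeff : P.coeff d = eval e g := by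
    rw [hP, coeff_aeval_of_isHomogeneous hg hp_deg]
    simp [hp]
  have hP_natDegree : P.natDegree = d := by
    refine le_antisymm ?_ (Polynomial.le_natDegree_of_ne_zero (hP_coeff ▸ he.eval_ne_zero hg))
    simpa using aeval_natDegree_le g hg.totalDegree_le p hp_deg
  refine ⟨P.roots.map Neg.neg, ?_, ?_, fun t => ?_⟩
  · rw [Multiset.card_map, ← hP_splits.natDegree_eq_card_roots, hP_natDegree]
  · simp only [Multiset.mem_map]
    rintro _ ⟨r, hr, rfl⟩
    by_contra! hneg
    exact ha r (by linarith) (hP_eval r ▸ Polynomial.isRoot_of_mem_roots hr)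
  · rw [← hP_eval, hP_splits.eval_eq_prod_roots, Polynomial.leadingCoeff, hP_natDegree,
      hP_coeff, Multiset.map_map]
    simp only [Function.comp_apply, sub_eq_add_neg]

theorem eval_rpow_add_mul_le (hg : g.IsHomogeneous d) (hd : d ≠ 0) (he : IsHyperbolicAlong g e)
    (he_pos : 0 < eval e g) (ha : a ∈ hyperbolicityCone g e) {t : ℝ} (ht : 0 ≤ t) :
    eval a g ^ (1 / (d : ℝ)) + t * eval e g ^ (1 / (d : ℝ)) ≤
      eval (a + t • e) g ^ (1 / (d : ℝ)) := by
  obtain ⟨m, rfl, hm, heval⟩ := he.exists_eval_add_smul_eq_prod hg ha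
  have hm_nonneg : ∀ r ∈ m, 0 ≤ r := fun r hr => (hm r hr).le
  have ha_eval : eval a g = eval e g * m.prod := by simpa using heval 0
  have hprod_nonneg : 0 ≤ (m.map fun r => t + r).prod :=
    Multiset.prod_map_nonneg fun r hr => add_nonneg ht (hm_nonneg r hr)
  rw [ha_eval, heval t, Real.mul_rpow he_pos.le (Multiset.prod_nonneg hm_nonneg),
    Real.mul_rpow he_pos.le hprod_nonneg]
  have := mul_le_mul_of_nonneg_left
    (add_multiset_prod_rpow_le (Multiset.card_pos.1 (Nat.pos_of_ne_zero hd)) hm_nonneg ht)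
    (Real.rpow_nonneg he_pos.le (1 / (m.card : ℝ)))
  linarith

theorem eval_pos_of_mem_hyperbolicityCone (hg : g.IsHomogeneous d) (he : IsHyperbolicAlong g e)
    (he_pos : 0 < eval e g) (ha : a ∈ hyperbolicityCone g e) : 0 < eval a g := by
  obtain ⟨m, -, hm, heval⟩ := he.exists_eval_add_smul_eq_prod hg ha
  have ha_eval : eval a g = eval e g * m.prod := by simpa using heval 0
  exact ha_eval ▸ mul_pos he_pos (Multiset.prod_pos hm)

theorem concaveOn_eval_rpow (hg : g.IsHomogeneous d) (hd : d ≠ 0) (he : IsHyperbolicAlong g e)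
    (he_pos : 0 < eval e g) :
    ConcaveOn ℝ (hyperbolicityCone g e) fun x => eval x g ^ (1 / (d : ℝ)) := by
  refine concaveOn_iff_forall_pos.2
    ⟨he.convex_hyperbolicityCone hg, fun a ha b hb u v hu hv _ => ?_⟩
  have hroot_smul : eval (u • a) g ^ (1 / (d : ℝ)) = u * eval a g ^ (1 / (d : ℝ)) := by
    rw [eval_smul_of_isHomogeneous hg, Real.mul_rpow (pow_nonneg hu.le d)
      (he.eval_pos_of_mem_hyperbolicityCone hg he_pos ha).le, one_div,
      Real.pow_rpow_inv_natCast hu.le hd]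
  have hle := (he.of_mem_hyperbolicityCone hg hb).eval_rpow_add_mul_le hg hd
    (he.eval_pos_of_mem_hyperbolicityCone hg he_pos hb)
    (smul_mem_hyperbolicityCone hg (he.hyperbolicityCone_subset hg hb ha) hu) hv.le
  rwa [hroot_smul] at hle

end IsHyperbolicAlong

end Concavity

section BorderedDeterminants

open Polynomial

theorem det_eq_mul_det_sub_dotProduct_adjugate_mulVec {A : Type*} [CommRing A] {n : ℕ}
    (D : Matrix (Fin (n + 1)) (Fin (n + 1)) A)
    (hD : IsRightRegular (D.submatrix Fin.succ Fin.succ).det) :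
    D.det = D 0 0 * (D.submatrix Fin.succ Fin.succ).det -
      (fun j : Fin n => D 0 j.succ) ⬝ᵥ
        ((D.submatrix Fin.succ Fin.succ).adjugate *ᵥ fun i : Fin n => D i.succ 0) := by
  set r := D.submatrix Fin.succ Fin.succ with hr
  set y : Fin n → A := fun i => D i.succ 0 with hy
  set v : Fin (n + 1) → A := Fin.cons r.det (-(r.adjugate *ᵥ y)) with hv
  have hcramer : (D.updateCol 0 (D *ᵥ v)).det = D.det * r.det := by
    rw [← cramer_apply, cramer_eq_adjugate_mulVec, mulVec_mulVec, adjugate_mul, smul_mulVec,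
      one_mulVec, Pi.smul_apply, hv, Fin.cons_zero, smul_eq_mul]
  have hzero : (D *ᵥ v) 0 = D 0 0 * r.det - (fun j : Fin n => D 0 j.succ) ⬝ᵥ (r.adjugate *ᵥ y) := by
    simp [mulVec, dotProduct, Fin.sum_univ_succ, hv, sub_eq_add_neg]
  have hsucc : ∀ i : Fin n, (D *ᵥ v) i.succ = 0 := fun i => by
    have hadj : (r *ᵥ (r.adjugate *ᵥ y)) i = r.det * y i := by
      rw [mulVec_mulVec, mul_adjugate, smul_mulVec, one_mulVec, Pi.smul_apply, smul_eq_mul]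
    calc (D *ᵥ v) i.succ = D i.succ 0 * r.det - (r *ᵥ (r.adjugate *ᵥ y)) i := by
          simp [mulVec, dotProduct, Fin.sum_univ_succ, hv, hr, sub_eq_add_neg]
      _ = 0 := by rw [hadj, hy, mul_comm, sub_self]
  have hexpand : (D.updateCol 0 (D *ᵥ v)).det = (D *ᵥ v) 0 * r.det := by
    have hsub : (D.updateCol 0 (D *ᵥ v)).submatrix Fin.succ Fin.succ = r := by
      ext i j
      simp [hr]
    rw [det_succ_column_zero, Fin.sum_univ_succ, Finset.sum_eq_zero fun i _ => by simp [hsucc]]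
    simp [hsub]
  exact hD (by simp only [← hcramer, hexpand, hzero])

theorem charpoly_smul_coeff {A m : Type*} [CommRing A] [Fintype m] [DecidableEq m]
    (M : Matrix m m A) (c : A) {i j : ℕ} (hij : i + j = Fintype.card m) :
    (c • M).charpoly.coeff i = c ^ j * M.charpoly.coeff i := by
  have hcoeff : ∀ N : Matrix m m A, N.charpoly.coeff i =
      MvPolynomial.eval (Function.uncurry N) ((charpoly.univ A m).coeff i) := fun N =>
    (charpoly.univ_coeff_eval₂Hom m (RingHom.id A) (Function.uncurry N) i).symm
  rw [hcoeff, hcoeff]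
  exact eval_smul_of_isHomogeneous (charpoly.univ_coeff_isHomogeneous A m i j hij) c _

variable {n : ℕ}

theorem natDegree_charpoly_fin {A : Type*} [CommRing A] [Nontrivial A]
    (L : Matrix (Fin n) (Fin n) A) : L.charpoly.natDegree = n := by
  rw [charpoly_natDegree_eq_dim, Fintype.card_fin]

theorem sigmaMat_zero (L : Matrix (Fin n) (Fin n) ℝ) : sigmaMat L 0 = 1 := by
  have hmonic := L.charpoly_monic.coeff_natDegree
  rw [natDegree_charpoly_fin] at hmonic
  rw [sigmaMat, pow_zero, one_mul, Nat.sub_zero, hmonic]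

theorem sigmaMat_smul (c : ℝ) (L : Matrix (Fin n) (Fin n) ℝ) {k : ℕ} (hk : k ≤ n) :
    sigmaMat (c • L) k = c ^ k * sigmaMat L k := by
  rw [sigmaMat, charpoly_smul_coeff L c (by rw [Nat.sub_add_cancel hk, Fintype.card_fin]),
    mul_left_comm, sigmaMat]

theorem charpoly_neg_coeff_sub (L : Matrix (Fin n) (Fin n) ℝ) {k : ℕ} (hk : k ≤ n) :
    (-L).charpoly.coeff (n - k) = sigmaMat L k := by
  rw [← neg_one_smul ℝ L,
    charpoly_smul_coeff L (-1) (by rw [Nat.sub_add_cancel hk, Fintype.card_fin]), sigmaMat]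

theorem charpoly_neg_eq_sum (L : Matrix (Fin n) (Fin n) ℝ) :
    (-L).charpoly = X ^ n + ∑ j ∈ Finset.range n, C (sigmaMat L (j + 1)) * X ^ (n - 1 - j) := by
  rw [(-L).charpoly_monic.as_sum, natDegree_charpoly_fin, ← Finset.sum_range_reflect]
  congr 1
  refine Finset.sum_congr rfl fun j hj => ?_
  rw [← charpoly_neg_coeff_sub L (Finset.mem_range.1 hj), Nat.sub_sub, add_comm 1 j]

theorem newtonT_zero (L : Matrix (Fin n) (Fin n) ℝ) : newtonT L 0 = 1 := by
  simp [newtonT, sigmaMat_zero]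

theorem newtonT_succ (L : Matrix (Fin n) (Fin n) ℝ) (j : ℕ) :
    newtonT L (j + 1) = sigmaMat L (j + 1) • 1 - L * newtonT L j := by
  rw [newtonT, Finset.sum_range_succ', newtonT, Finset.mul_sum, add_comm, sub_eq_add_neg,
    ← Finset.sum_neg_distrib]
  congr 1
  · simp
  · refine Finset.sum_congr rfl fun i _ => ?_
    rw [Nat.add_sub_add_right, mul_smul_comm, ← pow_succ', ← neg_smul]
    congr 1
    ring

theorem newtonT_self (L : Matrix (Fin n) (Fin n) ℝ) : newtonT L n = 0 := by
  rw [newtonT, ← aeval_self_charpoly (-L), aeval_eq_sum_range, natDegree_charpoly_fin]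
  refine Finset.sum_congr rfl fun i hi => ?_
  rw [← charpoly_neg_coeff_sub L (Nat.sub_le n i),
    Nat.sub_sub_self (Nat.lt_succ_iff.1 (Finset.mem_range.1 hi)), ← neg_one_smul ℝ L,
    _root_.smul_pow, smul_smul, mul_comm]

theorem charmatrix_neg {A m : Type*} [CommRing A] [Fintype m] [DecidableEq m] (M : Matrix m m A) :
    charmatrix (-M) = (X : A[X]) • (1 : Matrix m m A[X]) + M.map C := by
  ext i j : 1
  rcases eq_or_ne i j with rfl | hij
  · simp
  · simp [hij]

theorem map_C_newtonT_succ (L : Matrix (Fin n) (Fin n) ℝ) (j : ℕ) :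
    (newtonT L (j + 1)).map C =
      C (sigmaMat L (j + 1)) • (1 : Matrix (Fin n) (Fin n) ℝ[X]) -
        L.map C * (newtonT L j).map C := by
  rw [newtonT_succ, ← Matrix.map_mul, Matrix.map_sub _ (map_sub C)]
  congr 1
  ext a b : 1
  rcases eq_or_ne a b with rfl | hab
  · simp
  · simp [hab]

theorem charmatrix_neg_mul_smul_newtonT (L : Matrix (Fin n) (Fin n) ℝ) {j : ℕ} (hj : j < n) :
    charmatrix (-L) * ((X ^ (n - 1 - j) : ℝ[X]) • (newtonT L j).map C) =
      ((X ^ (n - j) : ℝ[X]) • (newtonT L j).map C -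
        (X ^ (n - (j + 1)) : ℝ[X]) • (newtonT L (j + 1)).map C) +
      (C (sigmaMat L (j + 1)) * X ^ (n - 1 - j)) • (1 : Matrix (Fin n) (Fin n) ℝ[X]) := by
  rw [map_C_newtonT_succ, charmatrix_neg, show n - j = n - 1 - j + 1 by lia,
    show n - (j + 1) = n - 1 - j by lia, add_mul, smul_mul_smul_comm, one_mul, mul_smul_comm,
    smul_sub, smul_smul, mul_comm (C _), pow_succ']
  abel

theorem charmatrix_neg_mul_sum_newtonT (L : Matrix (Fin n) (Fin n) ℝ) :
    charmatrix (-L) * ∑ j ∈ Finset.range n, (X ^ (n - 1 - j) : ℝ[X]) • (newtonT L j).map C =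
      (-L).charpoly • (1 : Matrix (Fin n) (Fin n) ℝ[X]) := by
  rw [Finset.mul_sum, Finset.sum_congr rfl fun j hj =>
      charmatrix_neg_mul_smul_newtonT L (Finset.mem_range.1 hj),
    Finset.sum_add_distrib,
    Finset.sum_range_sub' (fun j => (X ^ (n - j) : ℝ[X]) • (newtonT L j).map C),
    newtonT_self, newtonT_zero, ← Finset.sum_smul, charpoly_neg_eq_sum, add_smul]
  simp

theorem adjugate_charmatrix_neg (L : Matrix (Fin n) (Fin n) ℝ) :
    (charmatrix (-L)).adjugate =
      ∑ j ∈ Finset.range n, (X ^ (n - 1 - j) : ℝ[X]) • (newtonT L j).map C := by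
  have h := congrArg ((charmatrix (-L)).adjugate * ·) (charmatrix_neg_mul_sum_newtonT L)
  simp only [← mul_assoc, adjugate_mul, smul_mul_assoc, one_mul, mul_smul_comm, mul_one] at h
  exact (smul_right_injective _ (-L).charpoly_monic.ne_zero h).symm

/-- The polynomial `det (M + X J)`, where `J` is the diagonal matrix with entries `0, 1, …, 1`. -/
noncomputable def borderedPoly {A : Type*} [CommRing A]
    (M : Matrix (Fin (n + 1)) (Fin (n + 1)) A) : A[X] :=
  (M.map C + diagonal (Fin.cons 0 fun _ => X)).det

theorem borderedPoly_eq_sum (M : Matrix (Fin (n + 1)) (Fin (n + 1)) ℝ) :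
    borderedPoly M = C (M 0 0) * (-lowerBlock M).charpoly -
      ∑ j ∈ Finset.range n, C (xVec M ⬝ᵥ (newtonT (lowerBlock M) j *ᵥ xVec Mᵀ)) *
        X ^ (n - 1 - j) := by
  set D := M.map C + diagonal (Fin.cons 0 fun _ => X) with hD
  have hsub : D.submatrix Fin.succ Fin.succ = charmatrix (-lowerBlock M) := by
    ext i j : 1
    rcases eq_or_ne i j with rfl | hij
    · simp [hD, lowerBlock, add_comm]
    · simp [hD, lowerBlock, hij]
  have hrow : (fun j : Fin n => D 0 j.succ) = C ∘ xVec M := by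
    funext j
    simp [hD, xVec, diagonal_apply_ne _ (Fin.succ_ne_zero j).symm]
  have hcol : (fun i : Fin n => D i.succ 0) = C ∘ xVec Mᵀ := by
    funext i
    simp [hD, xVec]
  have hcorner : D 0 0 = C (M 0 0) := by simp [hD]
  rw [borderedPoly, det_eq_mul_det_sub_dotProduct_adjugate_mulVec D
      (by rw [hsub]; exact (charpoly_monic _).isRegular.right),
    hsub, hrow, hcol, hcorner, adjugate_charmatrix_neg, sum_mulVec, dotProduct_sum]
  refine congrArg _ (Finset.sum_congr rfl fun j _ => ?_)
  rw [smul_mulVec, dotProduct_smul, smul_eq_mul, mul_comm, RingHom.map_dotProduct]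
  congr 2
  funext i
  exact (RingHom.map_mulVec C _ _ i).symm

/-- The coefficient of `X ^ (n - k)` in `det (M + X J)`, which is `Fk k M` for a symmetric real
matrix `M`. -/
noncomputable def borderedCoeff {A : Type*} [CommRing A] (k : ℕ)
    (M : Matrix (Fin (n + 1)) (Fin (n + 1)) A) : A :=
  (borderedPoly M).coeff (n - k)

theorem map_borderedCoeff {A B : Type*} [CommRing A] [CommRing B] (f : A →+* B) (k : ℕ)
    (M : Matrix (Fin (n + 1)) (Fin (n + 1)) A) :
    f (borderedCoeff k M) = borderedCoeff k (M.map f) := by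
  rw [borderedCoeff, borderedCoeff, ← coeff_map, borderedPoly, borderedPoly, ← coe_mapRingHom,
    RingHom.map_det]
  congr 2
  ext i j : 1
  rcases eq_or_ne i j with rfl | hij
  · cases i using Fin.cases <;> simp
  · simp [hij]

theorem borderedCoeff_eq_Fk {k : ℕ} (hk1 : 1 ≤ k) (hkn : k ≤ n)
    {R : Matrix (Fin (n + 1)) (Fin (n + 1)) ℝ} (hR : R.IsSymm) : borderedCoeff k R = Fk k R := by
  rw [borderedCoeff, borderedPoly_eq_sum, coeff_sub, coeff_C_mul, charpoly_neg_coeff_sub _ hkn,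
    finsetSum_coeff, Finset.sum_eq_single_of_mem (k - 1) (Finset.mem_range.2 (by lia))
      fun j hj hne => ?_]
  · rw [coeff_C_mul, coeff_X_pow, if_pos (by lia), mul_one, hR.eq, Fk]
  · have := Finset.mem_range.1 hj
    rw [coeff_C_mul, coeff_X_pow, if_neg (by lia), mul_zero]

theorem borderedPoly_coeff_self {A : Type*} [CommRing A]
    (M : Matrix (Fin (n + 1)) (Fin (n + 1)) A) : (borderedPoly M).coeff n = M 0 0 := by
  set J : Matrix (Fin (n + 1)) (Fin (n + 1)) A := diagonal (Fin.cons 0 fun _ => 1) with hJ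
  set D := M.map C + diagonal (Fin.cons 0 fun _ => X) with hD
  have hrow : ∀ j, D 0 j = C (M 0 j) := fun j => by
    rcases eq_or_ne 0 j with rfl | hj
    · simp [hD]
    · simp [hD, hj]
  have hminor : ∀ j : Fin (n + 1), ((D.submatrix Fin.succ j.succAbove).det).coeff n =
      (J.submatrix Fin.succ j.succAbove).det := fun j => by
    have hsub : D.submatrix Fin.succ j.succAbove =
        (X : A[X]) • (J.submatrix Fin.succ j.succAbove).map C +
          (M.submatrix Fin.succ j.succAbove).map C := by
      ext a b : 1
      rcases eq_or_ne a.succ (j.succAbove b) with hab | hab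
      · simp [hD, hJ, ← hab, add_comm]
      · simp [hD, hJ, hab]
    have hcoeff := coeff_det_X_add_C_card (J.submatrix Fin.succ j.succAbove)
      (M.submatrix Fin.succ j.succAbove)
    rwa [Fintype.card_fin, ← hsub] at hcoeff
  have hupdate : (J.updateRow 0 (M 0)).IsUpperTriangular := fun i j (hij : j < i) => by
    rw [updateRow_ne (Fin.ne_zero_of_lt hij), hJ, diagonal_apply_ne _ hij.ne']
  calc (borderedPoly M).coeff n = (J.updateRow 0 (M 0)).det := by
        rw [borderedPoly, det_succ_row_zero, det_succ_row_zero, finsetSum_coeff]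
        refine Finset.sum_congr rfl fun j _ => ?_
        have hsign : (-1 : A[X]) ^ (j : ℕ) = C ((-1) ^ (j : ℕ)) := by simp
        have hsub := submatrix_updateRow_succAbove J (M 0) j.succAbove 0
        rw [Fin.succAbove_zero] at hsub
        rw [← hD, hrow, hsign, ← C_mul, coeff_C_mul, hminor, updateRow_self, hsub]
    _ = M 0 0 := by
        rw [det_of_isUpperTriangular hupdate, Fin.prod_univ_succ]
        simp [hJ]

end BorderedDeterminants

section HyperbolicityOfFk

open Polynomial

theorem rootSet_iterate_derivative_subset_convexHull_rootSet (P : ℂ[X]) (m : ℕ) :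
    (derivative^[m] P).rootSet ℂ ⊆ convexHull ℝ (P.rootSet ℂ) := by
  induction m with
  | zero => exact subset_convexHull ℝ _
  | succ m ih =>
    rw [Function.iterate_succ_apply']
    rcases Nat.eq_zero_or_pos (derivative^[m] P).natDegree with hconst | hpos
    · rw [derivative_of_natDegree_zero hconst, rootSet_zero]
      exact Set.empty_subset _
    · exact (rootSet_derivative_subset_convexHull_rootSet
        (natDegree_pos_iff_degree_pos.1 hpos)).trans (convexHull_min ih (convex_convexHull ℝ _))

theorem coeff_ne_zero_of_forall_im_nonneg_eval_ne_zero {P : ℂ[X]}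
    (hP : ∀ u : ℂ, 0 ≤ u.im → P.eval u ≠ 0) {m : ℕ} (hm : m ≤ P.natDegree) : P.coeff m ≠ 0 := by
  have hderiv : derivative^[m] P ≠ 0 := fun hzero => by
    have hlead := coeff_iterate_derivative (k := m) P (P.natDegree - m)
    rw [hzero, coeff_zero, Nat.sub_add_cancel hm] at hlead
    have hdesc : P.natDegree.descFactorial m ≠ 0 := (Nat.descFactorial_pos.2 hm).ne'
    have hP0 : P ≠ 0 := fun h => hP 0 le_rfl (by rw [h, eval_zero])
    exact smul_ne_zero hdesc (leadingCoeff_ne_zero.2 hP0) hlead.symm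
  have hlower : P.rootSet ℂ ⊆ {u : ℂ | u.im < 0} := fun u hu => by
    by_contra hnonneg
    exact hP u (not_lt.1 hnonneg) (by simpa using (mem_rootSet.1 hu).2)
  intro hcoeff
  have hroot : (0 : ℂ) ∈ (derivative^[m] P).rootSet ℂ := by
    rw [mem_rootSet, coe_aeval_eq_eval, ← coeff_zero_eq_eval_zero, coeff_iterate_derivative,
      zero_add, hcoeff, smul_zero]
    exact ⟨hderiv, rfl⟩
  exact lt_irrefl (0 : ℝ) (convexHull_min hlower (convex_halfSpace_im_lt 0)
    (rootSet_iterate_derivative_subset_convexHull_rootSet P m hroot))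

theorem det_add_diagonal_ne_zero_of_isHermitian {m : Type*} [Fintype m] [DecidableEq m]
    {H : Matrix m m ℂ} (hH : H.IsHermitian) {w : m → ℂ} (hw : ∀ i, 0 < (w i).im) :
    (H + diagonal w).det ≠ 0 := by
  intro hdet
  obtain ⟨v, hv, hzero⟩ := exists_mulVec_eq_zero_iff.2 hdet
  have hdiag : (star v ⬝ᵥ (diagonal w *ᵥ v)).im = ∑ i, (w i).im * Complex.normSq (v i) := by
    rw [dotProduct, Complex.im_sum]
    refine Finset.sum_congr rfl fun i _ => ?_
    rw [mulVec_diagonal, Pi.star_apply, mul_left_comm, Complex.star_def, mul_comm _ (v i),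
      Complex.mul_conj, Complex.im_mul_ofReal]
  have hsum : ∑ i, (w i).im * Complex.normSq (v i) = 0 := by
    have him : (star v ⬝ᵥ ((H + diagonal w) *ᵥ v)).im = 0 := by
      rw [hzero, dotProduct_zero, Complex.zero_im]
    have hreal : (star v ⬝ᵥ (H *ᵥ v)).im = 0 := hH.im_star_dotProduct_mulVec_self v
    rwa [add_mulVec, dotProduct_add, Complex.add_im, hreal, zero_add, hdiag] at him
  refine hv (funext fun i => Complex.normSq_eq_zero.1 ?_)
  have hterm := (Finset.sum_eq_zero_iff_of_nonneg fun i _ =>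
    mul_nonneg (hw i).le (Complex.normSq_nonneg (v i))).1 hsum i (Finset.mem_univ i)
  exact (mul_eq_zero.1 hterm).resolve_left (hw i).ne'

variable {n k : ℕ}

theorem borderedCoeff_add_smul_one_ne_zero {H : Matrix (Fin (n + 1)) (Fin (n + 1)) ℂ}
    (hH : H.IsHermitian) {z : ℂ} (hz : 0 < z.im) : borderedCoeff k (H + z • 1) ≠ 0 := by
  refine coeff_ne_zero_of_forall_im_nonneg_eval_ne_zero (fun u hu => ?_)
    ((Nat.sub_le n k).trans (le_natDegree_of_ne_zero ?_))
  · have heval : (borderedPoly (H + z • 1)).eval u =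
        (H + diagonal (Fin.cons z fun _ => z + u)).det := by
      rw [borderedPoly, ← coe_evalRingHom, RingHom.map_det]
      congr 1
      ext i j : 1
      rcases eq_or_ne i j with rfl | hij
      · cases i using Fin.cases <;> simp [add_assoc]
      · simp [hij]
    rw [heval]
    refine det_add_diagonal_ne_zero_of_isHermitian hH fun i => ?_
    cases i using Fin.cases with
    | zero => exact hz
    | succ i => exact add_pos_of_pos_of_nonneg hz hu
  · rw [borderedPoly_coeff_self]
    intro hzero
    have hreal : (H 0 0).im = 0 := Complex.conj_eq_iff_im.1 (hH.apply 0 0)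
    have him := congrArg Complex.im hzero
    simp only [Matrix.add_apply, Matrix.smul_apply, one_apply_eq, smul_eq_mul, mul_one,
      Complex.add_im, hreal, zero_add, Complex.zero_im] at him
    exact hz.ne' him

theorem isHomogeneous_det {R σ m : Type*} [CommRing R] [Fintype m] [DecidableEq m] {d : ℕ}
    {M : Matrix m m (MvPolynomial σ R)} (hM : ∀ i j, (M i j).IsHomogeneous d) :
    M.det.IsHomogeneous (Fintype.card m * d) := by
  rw [det_apply']
  refine MvPolynomial.IsHomogeneous.sum _ _ _ fun τ _ => ?_
  have hprod := MvPolynomial.IsHomogeneous.prod Finset.univ (fun i => M (τ i) i) (fun _ => d)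
    fun i _ => hM (τ i) i
  rw [Finset.sum_const, Finset.card_univ, smul_eq_mul] at hprod
  have hsign := MvPolynomial.isHomogeneous_C σ ((Equiv.Perm.sign τ : ℤ) : R)
  simpa using hsign.mul hprod

theorem isHomogeneous_borderedCoeff {R σ : Type*} [CommRing R] [Finite σ]
    {M : Matrix (Fin (n + 1)) (Fin (n + 1)) (MvPolynomial σ R)}
    (hM : ∀ i j, (M i j).IsHomogeneous 1) (hkn : k ≤ n) :
    (borderedCoeff k M).IsHomogeneous (k + 1) := by
  refine MvPolynomial.IsHomogeneous.coeff_isHomogeneous_of_optionEquivLeft_symm (n := n + 1) ?_ _ _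
    (by lia)
  rw [borderedPoly, AlgEquiv.map_det]
  set φ := (MvPolynomial.optionEquivLeft R σ).symm with hφ
  have hconst : ∀ i j, (φ (C (M i j))).IsHomogeneous 1 := fun i j => by
    rw [hφ, MvPolynomial.optionEquivLeft_symm_apply, aevalTower_C]
    exact (hM i j).rename_isHomogeneous
  have hX : (φ X).IsHomogeneous 1 := by
    rw [hφ, MvPolynomial.optionEquivLeft_symm_X]
    exact MvPolynomial.isHomogeneous_X R none
  have hentries : ∀ i j, (φ.mapMatrix (M.map C + diagonal (Fin.cons 0 fun _ => X)) i j)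
      |>.IsHomogeneous 1 := fun i j => by
    rcases eq_or_ne i j with rfl | hij
    · cases i using Fin.cases with
      | zero => simpa using hconst 0 0
      | succ i => simpa using (hconst i.succ i.succ).add hX
    · simpa [hij] using hconst i j
  simpa using isHomogeneous_det hentries

/-- `Fk k` as a polynomial in the entries of a symmetric matrix, the entries in positions `(i, j)`
and `(j, i)` being the same variable `s(i, j)`. -/
noncomputable def FkPoly (n k : ℕ) : MvPolynomial (Sym2 (Fin (n + 1))) ℝ :=
  borderedCoeff k (of fun i j => MvPolynomial.X s(i, j))

/-- The vector of entries of a symmetric matrix, indexed by unordered pairs. It takes one of the two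
entries at each pair, so it is linear on all matrices but meaningful only for symmetric ones. -/
noncomputable def symmEntries {m : Type*} (R : Matrix m m ℝ) : Sym2 m → ℝ :=
  fun p => R p.out.1 p.out.2

theorem symmEntries_mk {m : Type*} {R : Matrix m m ℝ} (hR : R.IsSymm) (i j : m) :
    symmEntries R s(i, j) = R i j := by
  have hout : s((Quot.out s(i, j)).1, (Quot.out s(i, j)).2) = s(i, j) := Quot.out_eq s(i, j)
  rcases Sym2.eq_iff.1 hout with ⟨h1, h2⟩ | ⟨h1, h2⟩
  · rw [symmEntries, h1, h2]
  · rw [symmEntries, h1, h2, hR.apply]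

theorem isHomogeneous_FkPoly (hkn : k ≤ n) : (FkPoly n k).IsHomogeneous (k + 1) :=
  isHomogeneous_borderedCoeff (fun i j => MvPolynomial.isHomogeneous_X ℝ s(i, j)) hkn

theorem aeval_FkPoly {A : Type*} [CommRing A] [Algebra ℝ A] (z : Sym2 (Fin (n + 1)) → A) :
    MvPolynomial.aeval z (FkPoly n k) = borderedCoeff k (of fun i j => z s(i, j)) := by
  rw [FkPoly, ← AlgHom.coe_toRingHom, map_borderedCoeff]
  congr 1
  ext i j : 1
  exact MvPolynomial.aeval_X z s(i, j)

theorem eval_FkPoly (hk1 : 1 ≤ k) (hkn : k ≤ n) {R : Matrix (Fin (n + 1)) (Fin (n + 1)) ℝ}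
    (hR : R.IsSymm) : MvPolynomial.eval (symmEntries R) (FkPoly n k) = Fk k R := by
  rw [← MvPolynomial.aeval_eq_eval, aeval_FkPoly, ← borderedCoeff_eq_Fk hk1 hkn hR]
  congr 1
  ext i j
  exact symmEntries_mk hR i j

theorem isHyperbolicAlong_FkPoly (hkn : k ≤ n) :
    IsHyperbolicAlong (FkPoly n k) (symmEntries 1) := by
  refine isHyperbolicAlong_of_im_pos (isHomogeneous_FkPoly hkn) fun x z hz => ?_
  have hH : (of fun i j => (x s(i, j) : ℂ) :
      Matrix (Fin (n + 1)) (Fin (n + 1)) ℂ).IsHermitian := by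
    ext i j
    simp [Sym2.eq_swap]
  rw [aeval_FkPoly]
  convert borderedCoeff_add_smul_one_ne_zero hH hz using 2
  ext i j : 1
  rcases eq_or_ne i j with rfl | hij
  · simp [symmEntries_mk isSymm_one]
  · simp [symmEntries_mk isSymm_one, hij]

end HyperbolicityOfFk

section PathsInS

open Polynomial

variable {n k : ℕ}

theorem sigmaMat_add_smul_one (L : Matrix (Fin n) (Fin n) ℝ) (t : ℝ) (hkn : k ≤ n) :
    sigmaMat (L + t • 1) k =
      ∑ i ∈ Finset.range (k + 1),
        ((i + (n - k)).choose (n - k) * sigmaMat L (k - i)) * t ^ i := by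
  have hcharpoly : (-(L + t • 1)).charpoly = taylor t (-L).charpoly := by
    rw [taylor_apply, ← charpoly_sub_scalar, scalar_apply, ← smul_one_eq_diagonal, neg_add,
      ← sub_eq_add_neg]
  have hdegree : (hasseDeriv (n - k) (-L).charpoly).natDegree < k + 1 := by
    refine (natDegree_hasseDeriv_le _ _).trans_lt ?_
    rw [natDegree_charpoly_fin]
    lia
  rw [← charpoly_neg_coeff_sub _ hkn, hcharpoly, taylor_coeff, eval_eq_sum_range' hdegree]
  refine Finset.sum_congr rfl fun i hi => ?_
  have hi' := Finset.mem_range.1 hi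
  rw [hasseDeriv_coeff, ← charpoly_neg_coeff_sub L (by lia : k - i ≤ n),
    show n - (k - i) = i + (n - k) by lia]

theorem sigmaMat_add_smul_one_pos (hkn : k ≤ n) {L : Matrix (Fin n) (Fin n) ℝ}
    (hL : ∀ j ≤ k, 0 ≤ sigmaMat L j) {t : ℝ} (ht : 0 < t) : 0 < sigmaMat (L + t • 1) k := by
  rw [sigmaMat_add_smul_one L t hkn]
  refine Finset.sum_pos' (fun i _ => ?_) ⟨k, Finset.self_mem_range_succ k, ?_⟩
  · have := hL (k - i) (Nat.sub_le k i)
    positivity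
  · have hchoose : 0 < (k + (n - k)).choose (n - k) := Nat.choose_pos (Nat.le_add_left _ _)
    rw [Nat.sub_self, sigmaMat_zero]
    positivity

theorem GammaPlus.sigmaMat_nonneg {L : Matrix (Fin n) (Fin n) ℝ} (hL : GammaPlus k L) {j : ℕ}
    (hj : j ≤ k) : 0 ≤ sigmaMat L j := by
  rcases Nat.eq_zero_or_pos j with rfl | hpos
  · rw [sigmaMat_zero]
    exact zero_le_one
  · exact (hL j hpos hj).le

theorem GammaPlus.sigmaMat_smul_add_smul_one_pos {L : Matrix (Fin n) (Fin n) ℝ}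
    (hL : GammaPlus k L) (hk1 : 1 ≤ k) (hkn : k ≤ n) {s : ℝ} (hs : s ∈ unitInterval) :
    0 < sigmaMat (s • L + (1 - s) • 1) k := by
  rcases hs.2.eq_or_lt with rfl | hs1
  · simpa using hL k hk1 le_rfl
  · refine sigmaMat_add_smul_one_pos hkn (fun j hj => ?_) (sub_pos.2 hs1)
    rw [sigmaMat_smul s L (hj.trans hkn)]
    exact mul_nonneg (pow_nonneg hs.1 j) (hL.sigmaMat_nonneg hj)

/-- The symmetric bordered matrix with corner `c`, border `x` and lower-right block `L`. -/
def borderedMatrix (c : ℝ) (x : Fin n → ℝ) (L : Matrix (Fin n) (Fin n) ℝ) :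
    Matrix (Fin (n + 1)) (Fin (n + 1)) ℝ :=
  of (Fin.cons (Fin.cons c x) fun i => Fin.cons (x i) (L i))

theorem isSymm_borderedMatrix (c : ℝ) (x : Fin n → ℝ) {L : Matrix (Fin n) (Fin n) ℝ}
    (hL : L.IsSymm) : (borderedMatrix c x L).IsSymm := by
  ext i j
  cases i using Fin.cases <;> cases j using Fin.cases <;> simp [borderedMatrix, hL.apply]

theorem Fk_borderedMatrix (c : ℝ) (x : Fin n → ℝ) (L : Matrix (Fin n) (Fin n) ℝ) :
    Fk k (borderedMatrix c x L) = c * sigmaMat L k - x ⬝ᵥ (newtonT L (k - 1) *ᵥ x) :=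
  rfl

theorem borderedMatrix_lowerBlock {R : Matrix (Fin (n + 1)) (Fin (n + 1)) ℝ} (hR : R.IsSymm) :
    borderedMatrix (R 0 0) (xVec R) (lowerBlock R) = R := by
  ext i j
  cases i using Fin.cases <;> cases j using Fin.cases <;>
    simp [borderedMatrix, lowerBlock, xVec, hR.apply]

theorem borderedMatrix_one_zero_one : borderedMatrix 1 (0 : Fin n → ℝ) 1 = 1 := by
  ext i j
  cases i using Fin.cases <;> cases j using Fin.cases <;>
    simp [borderedMatrix, one_apply, (Fin.succ_ne_zero _).symm]

theorem Fk_one_pos (hkn : k ≤ n) : 0 < Fk k (1 : Matrix (Fin (n + 1)) (Fin (n + 1)) ℝ) := by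
  have hzero : ∀ j ≤ k, 0 ≤ sigmaMat (0 : Matrix (Fin n) (Fin n) ℝ) j := fun j hj => by
    rcases Nat.eq_zero_or_pos j with rfl | hpos
    · rw [sigmaMat_zero]
      exact zero_le_one
    · rw [← zero_smul ℝ (0 : Matrix (Fin n) (Fin n) ℝ), sigmaMat_smul 0 0 (hj.trans hkn),
        zero_pow hpos.ne', zero_mul]
  simpa [← borderedMatrix_one_zero_one, Fk_borderedMatrix] using
    sigmaMat_add_smul_one_pos hkn hzero one_pos

theorem continuous_borderedMatrix {Z : Type*} [TopologicalSpace Z] {c : Z → ℝ}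
    {x : Z → Fin n → ℝ} {L : Z → Matrix (Fin n) (Fin n) ℝ} (hc : Continuous c)
    (hx : Continuous x) (hL : Continuous L) :
    Continuous fun z => borderedMatrix (c z) (x z) (L z) := by
  refine continuous_matrix fun i j => ?_
  cases i using Fin.cases <;> cases j using Fin.cases
  · exact hc
  · exact continuous_pi_iff.1 hx _
  · exact continuous_pi_iff.1 hx _
  · exact hL.matrix_elem _ _

theorem joinedIn_one_borderedMatrix {L : Matrix (Fin n) (Fin n) ℝ} (hL : L.IsSymm)
    (hgamma : GammaPlus k L) (hk1 : 1 ≤ k) (hkn : k ≤ n) :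
    JoinedIn {R | R.IsSymm ∧ Fk k R ≠ 0} 1 (borderedMatrix 1 0 L) := by
  refine JoinedIn.ofLine (f := fun s => borderedMatrix 1 0 (s • L + (1 - s) • 1))
    (continuous_borderedMatrix continuous_const continuous_const (by fun_prop)).continuousOn
    (by simp [borderedMatrix_one_zero_one]) (by simp)
    (Set.image_subset_iff.2 fun s hs =>
      ⟨isSymm_borderedMatrix _ _ ((hL.smul _).add (isSymm_one.smul _)), ?_⟩)
  simpa [Fk_borderedMatrix] using (hgamma.sigmaMat_smul_add_smul_one_pos hk1 hkn hs).ne'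

theorem Fk_borderedMatrix_smul_xVec (R : Matrix (Fin (n + 1)) (Fin (n + 1)) ℝ) (s : ℝ) :
    Fk k (borderedMatrix ((1 - s) + s ^ 2 * R 0 0) (s • xVec R) (lowerBlock R)) =
      (1 - s) * sigmaMat (lowerBlock R) k + s ^ 2 * Fk k R := by
  rw [Fk_borderedMatrix, mulVec_smul, dotProduct_smul, smul_dotProduct, smul_eq_mul, smul_eq_mul,
    Fk]
  ring

theorem joinedIn_borderedMatrix_of_inS {R : Matrix (Fin (n + 1)) (Fin (n + 1)) ℝ}
    (hR : inS k R) (hk1 : 1 ≤ k) :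
    JoinedIn {R | R.IsSymm ∧ Fk k R ≠ 0} (borderedMatrix 1 0 (lowerBlock R)) R := by
  obtain ⟨hsymm, hgamma, hpos⟩ := hR
  refine JoinedIn.ofLine
    (f := fun s => borderedMatrix ((1 - s) + s ^ 2 * R 0 0) (s • xVec R) (lowerBlock R))
    (continuous_borderedMatrix (by fun_prop) (by fun_prop) continuous_const).continuousOn
    (by simp) (by simp [borderedMatrix_lowerBlock hsymm])
    (Set.image_subset_iff.2 fun s hs =>
      ⟨isSymm_borderedMatrix _ _ (hsymm.submatrix Fin.succ), ?_⟩)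
  rw [Fk_borderedMatrix_smul_xVec]
  have hsigma := hgamma k hk1 le_rfl
  rcases hs.2.eq_or_lt with rfl | hs1
  · simpa using hpos.ne'
  · have := sub_pos.2 hs1
    positivity

theorem symmEntries_mem_hyperbolicityCone_of_inS (hk1 : 1 ≤ k) (hkn : k ≤ n)
    {R : Matrix (Fin (n + 1)) (Fin (n + 1)) ℝ} (hR : inS k R) :
    symmEntries R ∈ hyperbolicityCone (FkPoly n k) (symmEntries 1) := by
  have hhom := isHomogeneous_FkPoly hkn
  have hhyp := isHyperbolicAlong_FkPoly hkn
  have hpath : JoinedIn {R | R.IsSymm ∧ Fk k R ≠ 0} 1 R :=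
    (joinedIn_one_borderedMatrix (hR.1.submatrix Fin.succ) hR.2.1 hk1 hkn).trans
      (joinedIn_borderedMatrix_of_inS hR hk1)
  have hcont : Continuous (symmEntries (m := Fin (n + 1))) :=
    continuous_pi fun p => continuous_id.matrix_elem _ _
  refine hhyp.mem_hyperbolicityCone_of_joinedIn hhom
    ((hpath.map hcont).mono (Set.image_subset_iff.2 fun M hM => ?_))
    (hhyp.self_mem_hyperbolicityCone hhom)
  exact (eval_FkPoly hk1 hkn hM.1).trans_ne hM.2

end PathsInS

/-- `R ↦ F_k(R)^{1/(k+1)}` is concave on `S`. -/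
theorem Fk_rpow_concave (n k : ℕ) (hn : 1 ≤ n) (hk1 : 1 ≤ k) (hkn : k ≤ n)
    (R₀ R₁ : Matrix (Fin (n + 1)) (Fin (n + 1)) ℝ)
    (hR₀ : inS k R₀) (hR₁ : inS k R₁)
    (s : ℝ) (hs0 : 0 ≤ s) (hs1 : s ≤ 1) :
    (1 - s) * (Fk k R₀) ^ (1 / (k + 1 : ℝ)) + s * (Fk k R₁) ^ (1 / (k + 1 : ℝ)) ≤
      (Fk k ((1 - s) • R₀ + s • R₁)) ^ (1 / (k + 1 : ℝ)) := by
  have hone : 0 < MvPolynomial.eval (symmEntries 1) (FkPoly n k) := by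
    rw [eval_FkPoly hk1 hkn isSymm_one]
    exact Fk_one_pos hkn
  have hconcave := (isHyperbolicAlong_FkPoly hkn).concaveOn_eval_rpow (isHomogeneous_FkPoly hkn)
    k.succ_ne_zero hone
  have hle := hconcave.2 (symmEntries_mem_hyperbolicityCone_of_inS hk1 hkn hR₀)
    (symmEntries_mem_hyperbolicityCone_of_inS hk1 hkn hR₁) (sub_nonneg.2 hs1) hs0
    (sub_add_cancel 1 s)
  have hlinear : (1 - s) • symmEntries R₀ + s • symmEntries R₁ =
      symmEntries ((1 - s) • R₀ + s • R₁) := rfl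
  simp only [hlinear] at hle
  rw [eval_FkPoly hk1 hkn hR₀.1, eval_FkPoly hk1 hkn hR₁.1,
    eval_FkPoly hk1 hkn ((hR₀.1.smul _).add (hR₁.1.smul _))] at hle
  exact_mod_cast hle
end

section
/- Let n ≥ 1, 1 ≤ k ≤ n, 1 ≤ i ≤ n, and let r₁, …, r_n be real numbers. Then q_{i,k} interlaces σ_k(r+tI): if μ₁ ≤ … ≤ μ_{k−1} are the real roots of q_{i,k} and ν₁ ≤ … ≤ ν_k are the real roots of σ_k(r+tI), each listed with multiplicity in nondecreasing order, then ν₁ ≤ μ₁ ≤ ν₂ ≤ μ₂ ≤ … ≤ μ_{k−1} ≤ ν_k. -/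
open Polynomial

/-- `σ_m(r+tI) = Σ_{1≤i₁<…<i_m≤n} (t+r_{i₁})⋯(t+r_{i_m})` as a real polynomial in `t`. -/
noncomputable def sigmaTP (n : ℕ) (r : Fin n → ℝ) (m : ℕ) : Polynomial ℝ :=
  ∑ s ∈ Finset.powersetCard m (Finset.univ : Finset (Fin n)),
    ∏ i ∈ s, (X + C (r i))

/-- `q_{i,k}(t) = Σ_{j=0}^{k−1} (−1)^j σ_{k−1−j}(r+tI) (t+r_i)^j`. -/
noncomputable def qPoly (n : ℕ) (r : Fin n → ℝ) (i : Fin n) (k : ℕ) : Polynomial ℝ :=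
  ∑ j ∈ Finset.range k, ((-1 : ℝ) ^ j) • (sigmaTP n r (k - 1 - j) * (X + C (r i)) ^ j)

/-- `p_{k+1}(t) = (r₀₀ + t) σ_k(r+tI) − Σ_{i=1}^n q_{i,k}(t) x_i²`. -/
noncomputable def pPoly (n k : ℕ) (r₀₀ : ℝ) (r : Fin n → ℝ) (x : Fin n → ℝ) :
    Polynomial ℝ :=
  (X + C r₀₀) * sigmaTP n r k - ∑ i : Fin n, ((x i) ^ 2) • qPoly n r i k

/-- `π_n(t) = (t+r₁)⋯(t+r_n)`. -/
noncomputable def piN (n : ℕ) (r : Fin n → ℝ) : Polynomial ℝ :=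
  ∏ i : Fin n, (X + C (r i))

/-- `π_{i,n}(t) = ∏_{j≠i} (t+r_j)`. -/
noncomputable def piIN (n : ℕ) (r : Fin n → ℝ) (i : Fin n) : Polynomial ℝ :=
  ∏ j ∈ Finset.univ.erase i, (X + C (r j))


/-!
Let `E m` be `σ_m(r+tI)` with the entry `r_i` left out. Then `q_{i,k} = E (k-1)` and
`σ_k = E k + (X + r_i) * E (k-1)`, while `(E k)'` is a multiple of `E (k-1)`. Laguerre's inequality
`p * p'' ≤ p' ^ 2` for the real-rooted polynomial `p = E k` therefore gives
`q ^ 2 ≤ q * σ' - q' * σ` for `q = q_{i,k}` and `σ = σ_k`. This bound persists when common factors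
of `q` and `σ` are cancelled, after which `σ / q` is strictly increasing between its poles: two
roots of `σ` are always separated by a root of `q`. Hence an interval contains at most one more root
of `σ` than of `q`, and applying this to half-lines yields the interlacing.
-/

section Wronskian

variable {R : Type*} [CommRing R]

theorem eval_wronskian_derivative_self_nonneg_of_splits [LinearOrder R] [IsStrictOrderedRing R]
    {f : R[X]} (hf : f.Splits) (x : R) :
    0 ≤ (wronskian (derivative f) f).eval x := by
  induction hf using Submonoid.closure_induction with
  | mem p hp =>
    rcases hp with ⟨a, rfl⟩ | ⟨a, rfl⟩ <;> simp [wronskian]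
  | one => simp [wronskian]
  | mul p q _ _ hp hq =>
    have leibniz : wronskian (derivative (p * q)) (p * q) =
        q ^ 2 * wronskian (derivative p) p + p ^ 2 * wronskian (derivative q) q := by
      simp only [wronskian, derivative_mul, derivative_add]
      ring
    rw [leibniz, eval_add, eval_mul, eval_mul, eval_pow, eval_pow]
    positivity

theorem wronskian_mul_left_mul_left (d f g : R[X]) :
    wronskian (d * f) (d * g) = d ^ 2 * wronskian f g := by
  simp only [wronskian, derivative_mul]
  ring

theorem wronskian_self_X_add_C_mul (a : R) (g : R[X]) :
    wronskian g ((X + C a) * g) = g ^ 2 := by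
  simp only [wronskian, derivative_mul, derivative_add, derivative_X, derivative_C]
  ring

theorem nodup_roots_of_wronskian_ne_zero [IsDomain R] {f g : R[X]}
    (h : ∀ x, f.IsRoot x → (wronskian g f).eval x ≠ 0) :
    f.roots.Nodup := by
  classical
  refine Multiset.nodup_iff_count_le_one.2 fun x => ?_
  rw [count_roots]
  by_contra! hmult
  have hf0 : f ≠ 0 := by
    rintro rfl
    exact absurd hmult (by rw [rootMultiplicity_zero]; norm_num)
  obtain ⟨hf, hf'⟩ := (one_lt_rootMultiplicity_iff_isRoot hf0).1 hmult
  exact h x hf (by simp [wronskian, hf.eq_zero, hf'.eq_zero])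

end Wronskian

section Interlacing

variable {α : Type*} [LinearOrder α]

/-- `μ₁, …, μ_k` interlaces `ν₁, …, ν_{k+1}`: `ν₁ ≤ μ₁ ≤ ν₂ ≤ … ≤ μ_k ≤ ν_{k+1}`. Intended for the
roots of two polynomials of consecutive degrees, listed with multiplicity in increasing order. -/
def Interlaces {k : ℕ} (μ : Fin k → α) (ν : Fin (k + 1) → α) : Prop :=
  ∀ j : Fin k, ν j.castSucc ≤ μ j ∧ μ j ≤ ν j.succ

variable {k : ℕ} {μ : Fin k → α} {ν : Fin (k + 1) → α}

theorem castSucc_le_of_card_filter_ge_le (hμ : Monotone μ) (hν : Monotone ν) (j : Fin k)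
    (h : (Finset.univ.filter (ν j.castSucc ≤ ν ·)).card ≤
      (Finset.univ.filter (ν j.castSucc ≤ μ ·)).card + 1) : ν j.castSucc ≤ μ j := by
  by_contra! hlt
  have hge : Finset.Ici j.castSucc ⊆ Finset.univ.filter (ν j.castSucc ≤ ν ·) := fun l hl =>
    (Finset.mem_filter_univ l).2 (hν (Finset.mem_Ici.1 hl))
  have hle : Finset.univ.filter (ν j.castSucc ≤ μ ·) ⊆ Finset.Ioi j := fun l hl =>
    Finset.mem_Ioi.2 (hμ.reflect_lt (hlt.trans_le ((Finset.mem_filter_univ l).1 hl)))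
  have hcard := ((Finset.card_le_card hge).trans h).trans
    (Nat.add_le_add_right (Finset.card_le_card hle) 1)
  rw [Fin.card_Ici, Fin.card_Ioi, Fin.val_castSucc] at hcard
  omega

theorem le_succ_of_card_filter_le_le (hμ : Monotone μ) (hν : Monotone ν) (j : Fin k)
    (h : (Finset.univ.filter (ν · ≤ ν j.succ)).card ≤
      (Finset.univ.filter (μ · ≤ ν j.succ)).card + 1) : μ j ≤ ν j.succ := by
  by_contra! hlt
  have hge : Finset.Iic j.succ ⊆ Finset.univ.filter (ν · ≤ ν j.succ) := fun l hl =>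
    (Finset.mem_filter_univ l).2 (hν (Finset.mem_Iic.1 hl))
  have hle : Finset.univ.filter (μ · ≤ ν j.succ) ⊆ Finset.Iio j := fun l hl =>
    Finset.mem_Iio.2 (hμ.reflect_lt (((Finset.mem_filter_univ l).1 hl).trans_lt hlt))
  have hcard := ((Finset.card_le_card hge).trans h).trans
    (Nat.add_le_add_right (Finset.card_le_card hle) 1)
  rw [Fin.card_Iic, Fin.card_Iio, Fin.val_succ] at hcard
  omega

theorem interlaces_of_countP_le (hμ : Monotone μ) (hν : Monotone ν)
    (h : ∀ (s : Set α) [s.OrdConnected] [DecidablePred (· ∈ s)],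
      (Finset.univ.val.map ν).countP (· ∈ s) ≤ (Finset.univ.val.map μ).countP (· ∈ s) + 1) :
    Interlaces μ ν := fun j =>
  ⟨castSucc_le_of_card_filter_ge_le hμ hν j <| by
      simpa only [Multiset.countP_map, Finset.card_def, Finset.filter_val, Set.mem_Ici] using
        h (Set.Ici (ν j.castSucc)),
    le_succ_of_card_filter_le_le hμ hν j <| by
      simpa only [Multiset.countP_map, Finset.card_def, Finset.filter_val, Set.mem_Iic] using
        h (Set.Iic (ν j.succ))⟩

end Interlacing

section RootCounting

variable {f g : ℝ[X]}

theorem splits_derivative (hf : f.Splits) : (derivative f).Splits := by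
  have hle := card_roots_le_derivative f
  rw [hf.natDegree_eq_card_roots.symm] at hle
  have hdeg := natDegree_derivative_le f
  have hcard := card_roots' (derivative f)
  exact splits_iff_card_roots.2 (by omega)

theorem eval_nonneg_of_eval_sq_mul_nonneg (hg : g ≠ 0)
    (h : ∀ x, 0 ≤ (g ^ 2 * f).eval x) (x : ℝ) : 0 ≤ f.eval x := by
  have hdense : Dense {y | g.IsRoot y}ᶜ := (finite_setOfPred_isRoot hg).countable.dense_compl ℝ
  have hclosed : IsClosed {y | 0 ≤ f.eval y} := isClosed_le continuous_const f.continuous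
  refine hclosed.closure_subset_iff.2 (fun y hy => ?_) (hdense x)
  have hpos : 0 < g.eval y ^ 2 := sq_pos_of_ne_zero hy
  have hmul : 0 ≤ g.eval y ^ 2 * f.eval y := by simpa only [eval_mul, eval_pow] using h y
  exact nonneg_of_mul_nonneg_right hmul hpos

theorem hasDerivAt_eval_div_eval (f : ℝ[X]) {x : ℝ} (hx : g.eval x ≠ 0) :
    HasDerivAt (fun y => f.eval y / g.eval y) ((wronskian g f).eval x / g.eval x ^ 2) x := by
  have hW : (wronskian g f).eval x =
      (derivative f).eval x * g.eval x - f.eval x * (derivative g).eval x := by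
    simp only [wronskian, eval_sub, eval_mul]
    ring
  rw [hW]
  exact (f.hasDerivAt x).div (g.hasDerivAt x) hx

theorem exists_isRoot_mem_Icc_of_wronskian_pos
    (hW : ∀ z, g.eval z ≠ 0 → 0 < (wronskian g f).eval z) {x y : ℝ} (hxy : x < y)
    (hx : f.IsRoot x) (hy : f.IsRoot y) : ∃ z ∈ Set.Icc x y, g.IsRoot z := by
  by_contra! hg
  have hquot : ∀ z ∈ Set.Icc x y, HasDerivAt (fun z => f.eval z / g.eval z)
      ((wronskian g f).eval z / g.eval z ^ 2) z := fun z hz =>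
    hasDerivAt_eval_div_eval f (hg z hz)
  obtain ⟨z, hz, hz0⟩ := exists_hasDerivAt_eq_zero hxy
    (fun z hz => (hquot z hz).continuousAt.continuousWithinAt)
    (by rw [hx.eq_zero, hy.eq_zero, zero_div, zero_div])
    fun z hz => hquot z (Set.Ioo_subset_Icc_self hz)
  have hgz := hg z (Set.Ioo_subset_Icc_self hz)
  exact (div_pos (hW z hgz) (sq_pos_of_ne_zero hgz)).ne' hz0

variable (s : Set ℝ) [s.OrdConnected] [DecidablePred (· ∈ s)]

theorem countP_roots_le_of_isCoprime (hfg : IsCoprime f g)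
    (hW : ∀ x, g.eval x ^ 2 ≤ (wronskian g f).eval x) :
    f.roots.countP (· ∈ s) ≤ g.roots.countP (· ∈ s) + 1 := by
  have hWpos : ∀ x, g.eval x ≠ 0 → 0 < (wronskian g f).eval x := fun x hx =>
    (sq_pos_of_ne_zero hx).trans_le (hW x)
  have hgf : ∀ x, f.IsRoot x → g.eval x ≠ 0 := fun x hx hgx => by
    obtain ⟨a, b, hab⟩ := hfg
    simpa [hx.eq_zero, hgx] using congrArg (eval x) hab
  have hnodup : f.roots.Nodup :=
    nodup_roots_of_wronskian_ne_zero fun x hx => (hWpos x (hgf x hx)).ne'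
  have hinterleaved : (f.roots.filter (· ∈ s)).toFinset.card ≤
      (g.roots.filter (· ∈ s)).toFinset.card + 1 := by
    refine Finset.card_le_of_interleaved fun x hx y hy hxy _ => ?_
    simp only [Multiset.mem_toFinset, Multiset.mem_filter] at hx hy
    have hfx := isRoot_of_mem_roots hx.1
    have hfy := isRoot_of_mem_roots hy.1
    obtain ⟨z, hz, hgz⟩ := exists_isRoot_mem_Icc_of_wronskian_pos hWpos hxy hfx hfy
    have hg0 : g ≠ 0 := by
      rintro rfl
      exact hgf x hfx eval_zero
    refine ⟨z, ?_, hz.1.lt_of_ne ?_, hz.2.lt_of_ne ?_⟩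
    · simpa only [Multiset.mem_toFinset, Multiset.mem_filter, mem_roots hg0] using
        ⟨hgz, Set.OrdConnected.out ‹_› hx.2 hy.2 hz⟩
    · rintro rfl
      exact hgf _ hfx hgz
    · rintro rfl
      exact hgf _ hfy hgz
  rw [Multiset.countP_eq_card_filter, Multiset.countP_eq_card_filter]
  calc (f.roots.filter (· ∈ s)).card
      = (f.roots.filter (· ∈ s)).toFinset.card :=
        (Multiset.toFinset_card_of_nodup (hnodup.filter _)).symm
    _ ≤ (g.roots.filter (· ∈ s)).toFinset.card + 1 := hinterleaved
    _ ≤ (g.roots.filter (· ∈ s)).card + 1 := by gcongr; exact Multiset.toFinset_card_le _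

-- The weaker bound `0 ≤ wronskian g f` would not do: consider `g = 1` and `f = X ^ 3`.
theorem countP_roots_le_of_sq_le_wronskian (hg : g ≠ 0)
    (hW : ∀ x, g.eval x ^ 2 ≤ (wronskian g f).eval x) :
    f.roots.countP (· ∈ s) ≤ g.roots.countP (· ∈ s) + 1 := by
  rcases eq_or_ne f 0 with rfl | hf
  · simp
  obtain ⟨p, q, d, hpq, rfl, rfl⟩ := UniqueFactorizationMonoid.exists_reduced_factors f hf g
  have hd : d ≠ 0 := left_ne_zero_of_mul hf
  have hW' : ∀ x, q.eval x ^ 2 ≤ (wronskian q p).eval x := fun x => by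
    have hnonneg := eval_nonneg_of_eval_sq_mul_nonneg (f := wronskian q p - q ^ 2) hd
      (fun y => by
        have hcancel := hW y
        rw [← eval_pow, mul_pow, wronskian_mul_left_mul_left] at hcancel
        rwa [mul_sub, eval_sub, sub_nonneg]) x
    rwa [eval_sub, eval_pow, sub_nonneg] at hnonneg
  rw [roots_mul hf, roots_mul hg, Multiset.countP_add, Multiset.countP_add, add_assoc]
  exact Nat.add_le_add_left (countP_roots_le_of_isCoprime s hpq.isCoprime hW') _

theorem interlaces_of_sq_le_wronskian {k : ℕ} {μ : Fin k → ℝ} {ν : Fin (k + 1) → ℝ}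
    (hμ : Monotone μ) (hν : Monotone ν) (hg : g.roots = Finset.univ.val.map μ)
    (hf : f.roots = Finset.univ.val.map ν)
    (hW : ∀ x, g.eval x ^ 2 ≤ (wronskian g f).eval x) : Interlaces μ ν := by
  rcases eq_or_ne g 0 with rfl | hg0
  · have hk : k = 0 := by simpa using (congrArg Multiset.card hg).symm
    subst hk
    exact fun j => j.elim0
  · refine interlaces_of_countP_le hμ hν fun s _ _ => ?_
    rw [← hg, ← hf]
    exact countP_roots_le_of_sq_le_wronskian s hg0 hW

end RootCounting

section Esymm

variable {R : Type*}

theorem esymm_card [CommSemiring R] (s : Multiset R) : s.esymm s.card = s.prod := by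
  simp only [Multiset.esymm, Multiset.powersetCard_self, Multiset.map_singleton,
    Multiset.sum_singleton]

theorem esymm_cons_succ [CommSemiring R] (a : R) (s : Multiset R) (m : ℕ) :
    (a ::ₘ s).esymm (m + 1) = s.esymm (m + 1) + a * s.esymm m := by
  simp [Multiset.esymm, Multiset.powersetCard_cons, Multiset.sum_map_mul_left]

theorem sum_neg_one_pow_mul_esymm_cons_mul_pow [CommRing R] (a : R) (s : Multiset R)
    (m : ℕ) :
    ∑ j ∈ Finset.range (m + 1), (-1) ^ j * ((a ::ₘ s).esymm (m - j) * a ^ j) = s.esymm m := by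
  induction m with
  | zero => simp [Multiset.esymm]
  | succ m ih =>
    rw [Finset.sum_range_succ', eq_sub_of_add_eq (esymm_cons_succ a s m).symm, ← ih,
      Finset.mul_sum, sub_eq_neg_add, ← Finset.sum_neg_distrib]
    simp only [Nat.add_sub_add_right, pow_zero, mul_one, one_mul, Nat.sub_zero]
    congr 1
    refine Finset.sum_congr rfl fun j _ => ?_
    ring

/-- The polynomial `σ_m(s + tI)` in `t = X`, for a multiset `s` of shifts; multisets let an entry
be adjoined with `::ₘ`. -/
noncomputable def esymmXAddC [CommSemiring R] (s : Multiset R) (m : ℕ) : R[X] :=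
  (s.map fun a => X + C a).esymm m

theorem esymmXAddC_cons_succ [CommSemiring R] (a : R) (s : Multiset R) (m : ℕ) :
    esymmXAddC (a ::ₘ s) (m + 1) = esymmXAddC s (m + 1) + (X + C a) * esymmXAddC s m := by
  rw [esymmXAddC, Multiset.map_cons, esymm_cons_succ, esymmXAddC, esymmXAddC]

theorem esymmXAddC_of_card_lt [CommSemiring R] {s : Multiset R} {m : ℕ}
    (h : s.card < m) : esymmXAddC s m = 0 := by
  simp [esymmXAddC, Multiset.esymm, Multiset.powersetCard_eq_empty, h]

theorem derivative_esymmXAddC_succ [CommRing R] (s : Multiset R) (m : ℕ) :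
    derivative (esymmXAddC s (m + 1)) = C ((s.card : R) - m) * esymmXAddC s m := by
  induction s using Multiset.induction_on generalizing m with
  | empty => cases m <;> simp [esymmXAddC, Multiset.esymm, Multiset.powersetCard_zero_right]
  | cons a s ih =>
    rw [esymmXAddC_cons_succ, derivative_add, derivative_mul, ih, Multiset.card_cons]
    cases m with
    | zero => simp [esymmXAddC, Multiset.esymm]
    | succ m =>
      rw [ih, esymmXAddC_cons_succ]
      simp only [derivative_add, derivative_X, derivative_C, Nat.cast_add, Nat.cast_one, C_sub,
        C_add, C_1]
      ring

theorem splits_esymmXAddC (s : Multiset ℝ) (m : ℕ) : (esymmXAddC s m).Splits := by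
  rcases lt_or_ge s.card m with hm | hm
  · exact esymmXAddC_of_card_lt hm ▸ Splits.zero
  induction hm using Nat.decreasingInduction with
  | self =>
    rw [esymmXAddC, ← Multiset.card_map (fun a => X + C a) s, esymm_card]
    exact Splits.multisetProd fun p hp => by
      obtain ⟨a, -, rfl⟩ := Multiset.mem_map.1 hp
      exact Splits.X_add_C a
  | of_succ m hm ih =>
    have hsplits := splits_derivative ih
    have hc : (s.card : ℝ) - m ≠ 0 := sub_ne_zero.2 (by exact_mod_cast hm.ne')
    rwa [derivative_esymmXAddC_succ, splits_mul_iff_right (C_ne_zero.2 hc) (Splits.C _)]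
      at hsplits

theorem eval_wronskian_esymmXAddC_succ_nonneg (s : Multiset ℝ) (m : ℕ) (x : ℝ) :
    0 ≤ (wronskian (esymmXAddC s m) (esymmXAddC s (m + 1))).eval x := by
  rcases lt_or_ge m s.card with hm | hm
  · have hc : 0 < (s.card : ℝ) - m := sub_pos.2 (by exact_mod_cast hm)
    have hlaguerre := eval_wronskian_derivative_self_nonneg_of_splits
      (splits_esymmXAddC s (m + 1)) x
    rw [derivative_esymmXAddC_succ, ← smul_eq_C_mul, ← wronskianBilin_apply, map_smul,
      LinearMap.smul_apply, wronskianBilin_apply, eval_smul, smul_eq_mul] at hlaguerre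
    exact nonneg_of_mul_nonneg_right hlaguerre hc
  · rw [esymmXAddC_of_card_lt (Nat.lt_succ_of_le hm), wronskian_zero_right, eval_zero]

theorem sq_eval_esymmXAddC_le_eval_wronskian_cons (a : ℝ) (s : Multiset ℝ) (m : ℕ) (x : ℝ) :
    (esymmXAddC s m).eval x ^ 2 ≤
      (wronskian (esymmXAddC s m) (esymmXAddC (a ::ₘ s) (m + 1))).eval x := by
  rw [esymmXAddC_cons_succ, wronskian_add_right, wronskian_self_X_add_C_mul, eval_add, eval_pow]
  exact le_add_of_nonneg_left (eval_wronskian_esymmXAddC_succ_nonneg s m x)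

end Esymm

theorem sigmaTP_eq_esymmXAddC (n : ℕ) (r : Fin n → ℝ) (i : Fin n) (m : ℕ) :
    sigmaTP n r m = esymmXAddC (r i ::ₘ (Finset.univ.erase i).val.map r) m := by
  rw [← Multiset.map_cons, ← Finset.insert_val_of_notMem (Finset.notMem_erase i _),
    Finset.insert_erase (Finset.mem_univ i), esymmXAddC, Multiset.map_map]
  exact (Finset.esymm_map_val (fun l => X + C (r l)) Finset.univ m).symm

theorem qPoly_succ_eq_esymmXAddC (n : ℕ) (r : Fin n → ℝ) (i : Fin n) (m : ℕ) :
    qPoly n r i (m + 1) = esymmXAddC ((Finset.univ.erase i).val.map r) m := by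
  rw [esymmXAddC, ← sum_neg_one_pow_mul_esymm_cons_mul_pow (X + C (r i)), qPoly]
  refine Finset.sum_congr rfl fun j _ => ?_
  rw [sigmaTP_eq_esymmXAddC n r i, esymmXAddC, Multiset.map_cons, Nat.add_sub_cancel,
    smul_eq_C_mul, C_pow, C_neg, C_1]

/-- `q_{i,k}` interlaces `σ_k(r+tI)`:
`ν₁ ≤ μ₁ ≤ ν₂ ≤ μ₂ ≤ … ≤ μ_{k−1} ≤ ν_k`. -/
theorem qPoly_interlaces_sigmaTP (n k : ℕ) (hn : 1 ≤ n) (hk1 : 1 ≤ k) (hkn : k ≤ n)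
    (i : Fin n) (r : Fin n → ℝ)
    (μ : Fin (k - 1) → ℝ) (ν : Fin k → ℝ)
    (hμ : Monotone μ) (hν : Monotone ν)
    (hμroots : (qPoly n r i k).roots = Multiset.map μ Finset.univ.val)
    (hνroots : (sigmaTP n r k).roots = Multiset.map ν Finset.univ.val) :
    ∀ j : Fin (k - 1),
      ν ⟨j.1, by have := j.2; omega⟩ ≤ μ j ∧
        μ j ≤ ν ⟨j.1 + 1, by have := j.2; omega⟩ := by
  obtain ⟨m, rfl⟩ := Nat.exists_eq_add_of_le' hk1
  have hW : ∀ x, (qPoly n r i (m + 1)).eval x ^ 2 ≤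
      (wronskian (qPoly n r i (m + 1)) (sigmaTP n r (m + 1))).eval x := by
    rw [qPoly_succ_eq_esymmXAddC, sigmaTP_eq_esymmXAddC n r i]
    exact sq_eval_esymmXAddC_le_eval_wronskian_cons (r i) _ m
  exact interlaces_of_sq_le_wronskian hμ hν hμroots hνroots hW
end
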